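/- arXiv:1605.08305 — 2 statements merged into one kernel-verified Lean document; each statement's English description precedes it below -/
import Mathlib

section
/- Let K be a finite proper pre-cubical set with height function, v,w vertices, and c, c' two cube chains from v to w. If some natural tame path lies in both c and c', then there is a cube chain c∩c' from v to w such that a natural tame path lies in c∩c' if and only if it lies in both c and c'. Moreover, c∩c' ≤ c and c∩c' ≤ c'. -/
/-- A pre-cubical set: a family of sets of `n`-cubes with face maps
`dᵢᵉ : K[n+1] → K[n]` (indices `i` are 0-based here) satisfying the
pre-cubical relations `dᵢᵉ dⱼᶯ = dⱼ₋₁ᶯ dᵢᵉ` for `i < j`. -/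
structure PCS where
  cube : ℕ → Type
  face : Bool → ∀ {n : ℕ}, Fin (n + 1) → cube (n + 1) → cube n
  comm : ∀ {n : ℕ} (ε η : Bool) (i : Fin (n + 1)) (j : Fin (n + 2)),
    (i : ℕ) < (j : ℕ) → ∀ c : cube (n + 2),
    face ε i (face η j c) =
      face η ⟨(j : ℕ) - 1, by omega⟩ (face ε ⟨(i : ℕ), by omega⟩ c)

/-- The number of `*`'s (encoded as `none`) of a function `f : {1,…,n} → {0,1,*}`. -/
def numStars {n : ℕ} (f : Fin n → Option Bool) : ℕ := ∑ i, if f i = none then 1 else 0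

lemma numStars_castSucc {n : ℕ} (f : Fin (n + 1) → Option Bool) :
    numStars f = numStars (f ∘ Fin.castSucc) + (if f (Fin.last n) = none then 1 else 0) := by
  unfold numStars
  rw [Fin.sum_univ_castSucc]
  rfl

/-- Auxiliary for `dface`: the last `k` coordinates are untouched. -/
def PCS.dfaceAux (K : PCS) : ∀ (n k : ℕ) (f : Fin n → Option Bool),
    K.cube (n + k) → K.cube (numStars f + k)
  | 0, _, _, c => cast (congrArg K.cube (by simp [numStars])) c
  | n + 1, k, f, c =>
    match h : f (Fin.last n) with
    | some ε =>
        cast (congrArg K.cube (by rw [numStars_castSucc f, h]; simp))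
          (K.dfaceAux n k (f ∘ Fin.castSucc)
            (K.face ε ⟨n, by omega⟩ (cast (congrArg K.cube (by omega)) c)))
    | none =>
        cast (congrArg K.cube (by rw [numStars_castSucc f, h]; simp; omega))
          (K.dfaceAux n (k + 1) (f ∘ Fin.castSucc) (cast (congrArg K.cube (by omega)) c))

/-- `d_f(c)` : the composition `d₁^{f(1)} ⋯ d_n^{f(n)}` of face maps, where
`f i = some ε` means apply `dᵢᵉ` and `f i = none` means `dᵢ^*` (identity). -/
def PCS.dface (K : PCS) {n : ℕ} (f : Fin n → Option Bool) (c : K.cube n) :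
    K.cube (numStars f) :=
  cast (congrArg K.cube (by omega)) (K.dfaceAux n 0 f (cast (congrArg K.cube (by omega)) c))

/-- `dᵉ(c)`: the extreme vertex of a cube. -/
def PCS.extreme (K : PCS) (ε : Bool) {n : ℕ} (c : K.cube n) : K.cube 0 :=
  cast (congrArg K.cube (by simp [numStars])) (K.dface (fun _ => some ε) c)

/-- A pre-cubical set is proper if cubes are distinguished by their
pairs of extreme vertices. -/
def PCS.Proper (K : PCS) : Prop :=
  Function.Injective fun c : Σ n, K.cube n =>
    ({K.extreme false c.2, K.extreme true c.2} : Set (K.cube 0))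

/-- `chainFrom K v cs w`: the list of (positive-dimensional) cubes `cs` is
a cube chain from the vertex `v` to the vertex `w`. -/
def PCS.chainFrom (K : PCS) : K.cube 0 → List (Σ n, K.cube (n + 1)) → K.cube 0 → Prop
  | v, [], w => v = w
  | v, c :: cs, w => K.extreme false c.2 = v ∧ K.chainFrom (K.extreme true c.2) cs w

/-- The set of cube chains in `K` from `v` to `w`. -/
def CubeChain (K : PCS) (v w : K.cube 0) :=
  {cs : List (Σ n, K.cube (n + 1)) // K.chainFrom v cs w}

/-- `IsSplit K c c₁ c₂`: `(c₁, c₂) = (d⁰_Ā(c), d¹_A(c))` for some `∅ ≠ A ⊊ {1,…,n}`. -/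
def PCS.IsSplit (K : PCS) {n : ℕ} (c : K.cube (n + 1)) (c₁ c₂ : Σ m, K.cube (m + 1)) : Prop :=
  ∃ A : Finset (Fin (n + 1)), A ≠ ∅ ∧ A ≠ Finset.univ ∧
    HEq c₁.2 (K.dface (fun i => if i ∈ A then none else some false) c) ∧
    HEq c₂.2 (K.dface (fun i => if i ∈ A then some true else none) c)

/-- One splitting step `𝐜 ↦ d_{k,A}(𝐜)`: replace the `k`-th cube by its two halves. -/
def PCS.SplitStep (K : PCS) (cs cs' : List (Σ n, K.cube (n + 1))) : Prop :=
  ∃ (l₁ l₂ : List (Σ n, K.cube (n + 1))) (c c₁ c₂ : Σ n, K.cube (n + 1)),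
    cs = l₁ ++ c :: l₂ ∧ cs' = l₁ ++ c₁ :: c₂ :: l₂ ∧ K.IsSplit c.2 c₁ c₂

/-- The relation on cube chains generated by `d_{k,A}(𝐜) ≤ 𝐜`. -/
def chainLe {K : PCS} {v w : K.cube 0} (a b : CubeChain K v w) : Prop :=
  Relation.ReflTransGen (fun x y : CubeChain K v w => K.SplitStep y.1 x.1) a b

/-- A height function on `K`: `h(dᵢᵉ(c)) = h(c) + ε`. -/
def PCS.IsHeight (K : PCS) (h : ∀ {n : ℕ}, K.cube n → ℤ) : Prop :=
  ∀ {n : ℕ} (ε : Bool) (i : Fin (n + 1)) (c : K.cube (n + 1)),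
    h (K.face ε i c) = h c + (if ε then 1 else 0)

/-- Cubes form a discrete space. -/
instance PCS.cubeTop (K : PCS) (n : ℕ) : TopologicalSpace (K.cube n) := ⊥

/-- The disjoint union `∐ₙ K[n] × [0,1]ⁿ`. -/
def PCS.Pre (K : PCS) : Type := Σ n, K.cube n × (Fin n → unitInterval)

instance (K : PCS) : TopologicalSpace K.Pre := by unfold PCS.Pre; infer_instance

/-- The identifications `(dᵢᵉ(c), x) ∼ (c, δᵢᵉ(x))` of the geometric realization. -/
def PCS.geoRel (K : PCS) : K.Pre → K.Pre → Prop := fun x y =>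
  ∃ (n : ℕ) (ε : Bool) (i : Fin (n + 1)) (c : K.cube (n + 1)) (t : Fin n → unitInterval),
    (x = ⟨n, K.face ε i c, t⟩ ∧ y = ⟨n + 1, c, i.insertNth (if ε then 1 else 0) t⟩) ∨
    (y = ⟨n, K.face ε i c, t⟩ ∧ x = ⟨n + 1, c, i.insertNth (if ε then 1 else 0) t⟩)

/-- The geometric realization `|K|` (as a topological space). -/
def PCS.Geo (K : PCS) : Type := Quot K.geoRel

instance (K : PCS) : TopologicalSpace K.Geo := by unfold PCS.Geo; infer_instance

/-- The point of `|K|` corresponding to a vertex. -/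
def PCS.vpt (K : PCS) (u : K.cube 0) : K.Geo :=
  Quot.mk K.geoRel ⟨0, u, Fin.elim0⟩

/-- `|c| ⊆ |K|`, the (closed) geometric cube of a cube `c`. -/
def PCS.cubeSet (K : PCS) {n : ℕ} (c : K.cube n) : Set K.Geo :=
  Set.range fun x : Fin n → unitInterval => Quot.mk K.geoRel ⟨n, c, x⟩

/-- A directed path on `|K|` defined on `[a,b]`: continuous, and piecewise of
the form `α(s) = (cⱼ, βⱼ(s))` with all coordinates of `βⱼ` non-decreasing. -/
def PCS.IsDPathOn (K : PCS) (α : ℝ → K.Geo) (a b : ℝ) : Prop :=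
  ContinuousOn α (Set.Icc a b) ∧
  ∃ (m : ℕ) (t : Fin (m + 1) → ℝ), Monotone t ∧ t 0 = a ∧ t (Fin.last m) = b ∧
    ∀ j : Fin m, ∃ (n : ℕ) (c : K.cube n) (β : ℝ → Fin n → unitInterval),
      (∀ i : Fin n,
        MonotoneOn (fun s => (β s i : ℝ)) (Set.Icc (t j.castSucc) (t j.succ))) ∧
      ∀ s ∈ Set.Icc (t j.castSucc) (t j.succ), α s = Quot.mk K.geoRel ⟨n, c, β s⟩

/-- `α` is natural on `[a,b]`: the height of `α(s)` equals `s`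
(stated for every representative of `α(s)`). -/
def PCS.NaturalOn (K : PCS) (h : ∀ {n : ℕ}, K.cube n → ℤ) (α : ℝ → K.Geo)
    (a b : ℝ) : Prop :=
  ∀ s ∈ Set.Icc a b, ∀ (n : ℕ) (c : K.cube n) (x : Fin n → unitInterval),
    Quot.mk K.geoRel ⟨n, c, x⟩ = α s → (h c : ℝ) + ∑ i, (x i : ℝ) = s

/-- `α` is tame on `[a,b]`: each segment either stays in a single cube or
passes through a vertex. -/
def PCS.TameOn (K : PCS) (α : ℝ → K.Geo) (a b : ℝ) : Prop :=
  ∀ s t : ℝ, a ≤ s → s < t → t ≤ b →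
    (∃ (n : ℕ) (c : K.cube n), Set.MapsTo α (Set.Icc s t) (K.cubeSet c)) ∨
    (∃ u : K.cube 0, K.vpt u ∈ α '' Set.Icc s t)

/-- A natural tame (directed) path in `|K|` from `v` to `w`, where
`h(v) = 0` and `h(w) = N`. -/
def PCS.NatTamePath (K : PCS) (h : ∀ {n : ℕ}, K.cube n → ℤ) (v w : K.cube 0)
    (N : ℕ) (α : ℝ → K.Geo) : Prop :=
  K.IsDPathOn α 0 N ∧ α 0 = K.vpt v ∧ α N = K.vpt w ∧
    K.NaturalOn h α 0 N ∧ K.TameOn α 0 N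

/-- `b_i`, the partial sums of the dimensions of the cubes of a chain. -/
def bsum {K : PCS} (cs : List (Σ n, K.cube (n + 1))) (i : ℕ) : ℝ :=
  ((cs.take i).map fun c => (c.1 : ℝ) + 1).sum

/-- `α` lies in the cube chain `cs`: `α([b_{i−1}, b_i]) ⊆ |cᵢ|`. -/
def PCS.liesIn (K : PCS) (α : ℝ → K.Geo) (cs : List (Σ n, K.cube (n + 1))) : Prop :=
  ∀ (i : ℕ) (hi : i < cs.length),
    Set.MapsTo α (Set.Icc (bsum cs i) (bsum cs (i + 1)))
      (K.cubeSet (cs.get ⟨i, hi⟩).2)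

namespace PCS

/-- All cubes of `K`. -/
abbrev X (K : PCS) : Type := Σ n, K.cube n

/-- Total version of the face maps. -/
def F (K : PCS) (ε : Bool) (i : ℕ) : K.X → K.X
  | ⟨0, c⟩ => ⟨0, c⟩
  | ⟨n + 1, c⟩ => if h : i < n + 1 then ⟨n, K.face ε ⟨i, h⟩ c⟩ else ⟨n + 1, c⟩

lemma F_lt (K : PCS) (ε : Bool) (i n : ℕ) (c : K.cube (n + 1)) (h : i < n + 1) :
    K.F ε i ⟨n + 1, c⟩ = ⟨n, K.face ε ⟨i, h⟩ c⟩ := by simp [F, h]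

lemma F_ge (K : PCS) (ε : Bool) (i : ℕ) (c : K.X) (h : c.1 ≤ i) : K.F ε i c = c := by
  obtain ⟨n, c⟩ := c
  cases n with
  | zero => rfl
  | succ n => simp only at h; simp [F]; omega

lemma F_dim (K : PCS) (ε : Bool) (i : ℕ) (c : K.X) (h : i < c.1) : (K.F ε i c).1 + 1 = c.1 := by
  obtain ⟨n, c⟩ := c
  cases n with
  | zero => simp at h
  | succ n => rw [F_lt K ε i n c h]

lemma F_comm (K : PCS) (ε η : Bool) (i j : ℕ) (hij : i < j) (c : K.X) :
    K.F ε i (K.F η j c) = K.F η (j - 1) (K.F ε i c) := by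
  by_cases hj : c.1 ≤ j
  · rw [F_ge K η j c hj]
    rw [F_ge K η (j - 1)]
    by_cases hi : i < c.1
    · have := F_dim K ε i c hi
      omega
    · rw [F_ge K ε i c (by omega)]; omega
  · obtain ⟨n, c⟩ := c
    simp only at hj
    obtain _ | _ | n := n
    · omega
    · omega
    · rw [F_lt K η j _ c (by omega), F_lt K ε i _ c (by omega), F_lt K ε i _ _ (by omega),
        F_lt K η (j-1) _ _ (by omega)]
      congr 1
      exact K.comm ε η ⟨i, by omega⟩ ⟨j, by omega⟩ hij c

/-- Iterated faces: apply the signs `f 0, …, f (n-1)`. -/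
def D (K : PCS) : ℕ → (ℕ → Option Bool) → K.X → K.X
  | 0, _, c => c
  | n + 1, f, c => match f n with
    | some ε => D K n f (K.F ε n c)
    | none => D K n f c

lemma D_some (K : PCS) {n : ℕ} {f : ℕ → Option Bool} {ε : Bool} (h : f n = some ε) (c : K.X) :
    K.D (n + 1) f c = K.D n f (K.F ε n c) := by simp [D, h]

lemma D_none (K : PCS) {n : ℕ} {f : ℕ → Option Bool} (h : f n = none) (c : K.X) :
    K.D (n + 1) f c = K.D n f c := by simp [D, h]

lemma D_congr (K : PCS) {n : ℕ} {f g : ℕ → Option Bool} (h : ∀ i < n, f i = g i) (c : K.X) :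
    K.D n f c = K.D n g c := by
  induction n generalizing c with
  | zero => rfl
  | succ n ih =>
    have ih' := fun c => ih (fun i hi => h i (by omega)) c
    have hn := h n (by omega)
    cases hf : f n with
    | none => rw [D_none K hf, D_none K (hn ▸ hf), ih']
    | some ε => rw [D_some K hf, D_some K (hn ▸ hf), ih']

/-- number of stars below `n` -/
def st (f : ℕ → Option Bool) (n : ℕ) : ℕ := Nat.count (fun k => f k = none) n

lemma st_none {f : ℕ → Option Bool} {n : ℕ} (h : f n = none) : st f (n + 1) = st f n + 1 := by
  simp [st, Nat.count_succ, h]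

lemma st_some {f : ℕ → Option Bool} {n : ℕ} {ε : Bool} (h : f n = some ε) :
    st f (n + 1) = st f n := by
  simp [st, Nat.count_succ, h]

lemma st_le (f : ℕ → Option Bool) (n : ℕ) : st f n ≤ n := Nat.count_le _

lemma D_dim (K : PCS) {n : ℕ} {f : ℕ → Option Bool} {c : K.X} (h : n ≤ c.1) :
    (K.D n f c).1 + n = c.1 + st f n := by
  induction n generalizing c with
  | zero => simp [D, st]
  | succ n ih =>
    cases hf : f n with
    | none => rw [D_none K hf, st_none hf]; have := ih (c := c) (by omega); omega
    | some ε =>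
      have h1 := F_dim K ε n c (by omega)
      rw [D_some K hf, st_some hf]; have := ih (c := K.F ε n c) (by omega); omega

lemma D_dim' (K : PCS) (f : ℕ → Option Bool) (c : K.X) : (K.D c.1 f c).1 = st f c.1 := by
  have := D_dim K (f := f) (c := c) le_rfl
  omega

lemma F_D (K : PCS) (ε : Bool) (f : ℕ → Option Bool) (n m : ℕ) (c : K.X) :
    K.F ε (st f n + m) (K.D n f c) = K.D n f (K.F ε (n + m) c) := by
  induction n generalizing c m with
  | zero => simp [D, st]
  | succ n ih =>
    cases hf : f n with
    | none =>
      rw [D_none K hf, D_none K hf, st_none hf, add_assoc, ih, add_assoc]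
    | some η =>
      rw [D_some K hf, D_some K hf, st_some hf, ih, F_comm K η ε n (n + 1 + m) (by omega)]
      congr 2
      omega

/-- composition of sign functions -/
def cmp (f g : ℕ → Option Bool) (i : ℕ) : Option Bool := if f i = none then g (st f i) else f i

lemma D_D_aux (K : PCS) (f g : ℕ → Option Bool) (n : ℕ) (c : K.X) :
    K.D (st f n) g (K.D n f c) = K.D n (cmp f g) c := by
  induction n generalizing c with
  | zero => rfl
  | succ n ih =>
    cases hf : f n with
    | some ε =>
      have h2 : cmp f g n = some ε := by simp [cmp, hf]
      rw [D_some K hf, D_some K h2, st_some hf, ih]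
    | none =>
      have h2 : cmp f g n = g (st f n) := by simp [cmp, hf]
      rw [D_none K hf, st_none hf]
      cases hg : g (st f n) with
      | none => rw [D_none K hg, D_none K (h2.trans hg), ih]
      | some ε =>
        rw [D_some K hg, D_some K (h2.trans hg), ← ih]
        have := F_D K ε f n 0 c
        simp only [add_zero] at this
        rw [this]

/-- full face -/
def dd (K : PCS) (f : ℕ → Option Bool) (c : K.X) : K.X := K.D c.1 f c

lemma dd_dd (K : PCS) (f g : ℕ → Option Bool) (c : K.X) :
    K.dd g (K.dd f c) = K.dd (cmp f g) c := by
  unfold dd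
  rw [D_dim' K f c]
  exact D_D_aux K f g c.1 c

lemma dd_congr (K : PCS) {f g : ℕ → Option Bool} {c : K.X} (h : ∀ i < c.1, f i = g i) :
    K.dd f c = K.dd g c := D_congr K h c

/-- residual signs -/
noncomputable def res (f g : ℕ → Option Bool) (k : ℕ) : Option Bool := f (Nat.nth (fun i => g i = none) k)

lemma cmp_res {f g : ℕ → Option Bool} {i : ℕ} (h : g i = none ∨ f i = g i) :
    cmp g (res f g) i = f i := by
  unfold cmp res st
  by_cases h' : g i = none
  · rw [if_pos h', Nat.nth_count (p := fun i => g i = none) h']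
  · rw [if_neg h']
    tauto

lemma dd_res (K : PCS) {f g : ℕ → Option Bool} {c : K.X}
    (h : ∀ i < c.1, g i = none ∨ f i = g i) : K.dd (res f g) (K.dd g c) = K.dd f c := by
  rw [dd_dd]
  exact dd_congr K fun i hi => cmp_res (h i hi)

lemma D_all_none (K : PCS) (n : ℕ) (c : K.X) : K.D n (fun _ => none) c = c := by
  induction n generalizing c with
  | zero => rfl
  | succ n ih => rw [D_none K rfl, ih]

lemma dd_none (K : PCS) (c : K.X) : K.dd (fun _ => none) c = c := D_all_none K _ c

/-- extreme vertices, as elements of `X` -/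
def ex (K : PCS) (ε : Bool) (c : K.X) : K.X := K.dd (fun _ => some ε) c

lemma ex_dd (K : PCS) (ε : Bool) (f : ℕ → Option Bool) (c : K.X) :
    K.ex ε (K.dd f c) = K.dd (fun i => some ((f i).getD ε)) c := by
  unfold ex
  rw [dd_dd]
  apply dd_congr
  intro i _
  unfold cmp
  cases f i <;> simp

lemma X_cast (K : PCS) {m n : ℕ} (h : m = n) (h' : K.cube m = K.cube n) (c : K.cube m) :
    (⟨n, cast h' c⟩ : K.X) = ⟨m, c⟩ := by
  subst h; rfl

/-- extend signs on `Fin n` to `ℕ` -/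
def extS {n : ℕ} (f : Fin n → Option Bool) (i : ℕ) : Option Bool :=
  if h : i < n then f ⟨i, h⟩ else none

lemma dfaceAux_eq (K : PCS) (n k : ℕ) (f : Fin n → Option Bool) (c : K.cube (n + k)) :
    (⟨numStars f + k, K.dfaceAux n k f c⟩ : K.X) = K.D n (extS f) ⟨n + k, c⟩ := by
  induction n generalizing k with
  | zero =>
    simp only [dfaceAux, D]
    rw [X_cast K (by simp [numStars])]
  | succ n ih =>
    have hl : extS f n = f (Fin.last n) := by simp [extS, Fin.last]
    have hc : ∀ d, K.D n (extS (f ∘ Fin.castSucc)) d = K.D n (extS f) d := by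
      intro d
      apply D_congr
      intro i hi
      simp [extS, hi, Nat.lt_succ_of_lt hi]
    rw [dfaceAux]
    split
    · rename_i ε h
      rw [X_cast K (by rw [numStars_castSucc f, h]; simp), ih, hc, D_some K (hl.trans h)]
      congr 1
      rw [← F_lt, X_cast K (by omega)]
    · rename_i h
      rw [X_cast K (by rw [numStars_castSucc f, h]; simp; omega), ih, hc, D_none K (hl.trans h)]
      rw [X_cast K (by omega)]

lemma dface_eq (K : PCS) {n : ℕ} (f : Fin n → Option Bool) (c : K.cube n) :
    (⟨numStars f, K.dface f c⟩ : K.X) = K.dd (extS f) ⟨n, c⟩ := by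
  unfold dface
  rw [X_cast K (by omega)]
  exact (dfaceAux_eq K n 0 f _)

lemma extreme_eq (K : PCS) (ε : Bool) {n : ℕ} (c : K.cube n) :
    (⟨0, K.extreme ε c⟩ : K.X) = K.ex ε ⟨n, c⟩ := by
  unfold extreme ex
  rw [X_cast K (by simp [numStars]), dface_eq]
  apply dd_congr
  intro i hi
  simp only at hi
  simp [extS, hi]

lemma proper_uniq {K : PCS} (hK : K.Proper) {a b : K.X} (h0 : K.ex false a = K.ex false b)
    (h1 : K.ex true a = K.ex true b) : a = b := by
  obtain ⟨n, a⟩ := a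
  obtain ⟨m, b⟩ := b
  apply hK
  rw [← extreme_eq, ← extreme_eq] at h0 h1
  have h0' := eq_of_heq (Sigma.mk.inj h0).2
  have h1' := eq_of_heq (Sigma.mk.inj h1).2
  simp only [h0', h1']

/-! ### face relations -/

/-- `e` is a face of `c`. -/
def Fc (K : PCS) (e c : K.X) : Prop := ∃ f, e = K.dd f c
/-- lower face -/
def Fc0 (K : PCS) (e c : K.X) : Prop := ∃ f, (∀ i, f i ≠ some true) ∧ e = K.dd f c
/-- vertex at `S` -/
def vx (K : PCS) (S : ℕ → Bool) (c : K.X) : K.X := K.dd (fun i => some (S i)) c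
/-- `u` is a vertex of `c` -/
def Vt (K : PCS) (u c : K.X) : Prop := ∃ S, u = K.vx S c

lemma Fc0.fc {K : PCS} {e c : K.X} (h : K.Fc0 e c) : K.Fc e c := by
  obtain ⟨f, _, rfl⟩ := h; exact ⟨f, rfl⟩

lemma Fc.trans {K : PCS} {a b c : K.X} (h : K.Fc a b) (h' : K.Fc b c) : K.Fc a c := by
  obtain ⟨f, rfl⟩ := h
  obtain ⟨g, rfl⟩ := h'
  exact ⟨_, dd_dd K g f c⟩

lemma Fc0.trans {K : PCS} {a b c : K.X} (h : K.Fc0 a b) (h' : K.Fc0 b c) : K.Fc0 a c := by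
  obtain ⟨f, hf, rfl⟩ := h
  obtain ⟨g, hg, rfl⟩ := h'
  refine ⟨_, ?_, dd_dd K g f c⟩
  intro i
  unfold cmp
  split
  · exact hf _
  · exact hg _

lemma Fc0.lo {K : PCS} {e c : K.X} (h : K.Fc0 e c) : K.ex false e = K.ex false c := by
  obtain ⟨f, hf, rfl⟩ := h
  rw [ex_dd]
  apply dd_congr
  intro i _
  have := hf i
  cases h : f i with
  | none => rfl
  | some b => cases b <;> simp_all

lemma Vt.fc {K : PCS} {u a c : K.X} (h : K.Vt u a) (h' : K.Fc a c) : K.Vt u c := by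
  obtain ⟨S, rfl⟩ := h
  obtain ⟨f, rfl⟩ := h'
  unfold vx
  rw [dd_dd]
  refine ⟨fun i => (f i).getD (S (st f i)), ?_⟩
  apply dd_congr
  intro i _
  unfold cmp
  cases h : f i <;> simp [h]

/-- lower cube `[∅,S]` signs and upper cube `[S,1]` signs -/
def loS (S : ℕ → Bool) (i : ℕ) : Option Bool := if S i then none else some false
/-- upper -/
def hiS (S : ℕ → Bool) (i : ℕ) : Option Bool := if S i then some true else none

lemma loS_fc0 (K : PCS) (S : ℕ → Bool) (c : K.X) : K.Fc0 (K.dd (loS S) c) c := by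
  refine ⟨_, ?_, rfl⟩
  intro i; unfold loS; split <;> simp

lemma loS_hi (K : PCS) (S : ℕ → Bool) (c : K.X) : K.ex true (K.dd (loS S) c) = K.vx S c := by
  rw [ex_dd]; apply dd_congr; intro i _; unfold loS; cases S i <;> simp

lemma loS_lo (K : PCS) (S : ℕ → Bool) (c : K.X) :
    K.ex false (K.dd (loS S) c) = K.ex false c := (loS_fc0 K S c).lo

lemma hiS_lo (K : PCS) (S : ℕ → Bool) (c : K.X) : K.ex false (K.dd (hiS S) c) = K.vx S c := by
  rw [ex_dd]; apply dd_congr; intro i _; unfold hiS; cases S i <;> simp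

lemma hiS_hi (K : PCS) (S : ℕ → Bool) (c : K.X) : K.ex true (K.dd (hiS S) c) = K.ex true c := by
  rw [ex_dd]; apply dd_congr; intro i _; unfold hiS; cases S i <;> simp

lemma Vt.split {K : PCS} {u c : K.X} (h : K.Vt u c) : ∃ p, K.Fc0 p c ∧ K.ex true p = u := by
  obtain ⟨S, rfl⟩ := h
  exact ⟨_, loS_fc0 K S c, loS_hi K S c⟩

/-- `u ≤ v` inside `c` -/
def R (K : PCS) (c u v : K.X) : Prop := ∃ p, K.Fc0 p c ∧ K.ex true p = v ∧ K.Vt u p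

lemma R.trans {K : PCS} (hK : K.Proper) {c u v w : K.X} (h : K.R c u v) (h' : K.R c v w) :
    K.R c u w := by
  obtain ⟨p, hp, rfl, hu⟩ := h
  obtain ⟨p2, hp2, rfl, hv⟩ := h'
  obtain ⟨p', hp', he⟩ := hv.split
  have : p = p' := proper_uniq hK (by rw [hp.lo, (hp'.trans hp2).lo]) he.symm
  subst this
  exact ⟨p2, hp2, rfl, hu.fc hp'.fc⟩

lemma Fc.R {K : PCS} {e c : K.X} (h : K.Fc e c) : K.R c (K.ex false e) (K.ex true e) := by
  obtain ⟨f, rfl⟩ := h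
  refine ⟨_, loS_fc0 K (fun i => (f i).getD true) c, ?_, ?_⟩
  · rw [loS_hi, ex_dd]; rfl
  · have : K.Fc (K.dd f c) (K.dd (loS (fun i => (f i).getD true)) c) := by
      refine ⟨_, (dd_res K (fun i _ => ?_)).symm⟩
      unfold loS
      cases h : f i with
      | none => simp [h]
      | some b => cases b <;> simp [h]
    exact Vt.fc ⟨fun _ => false, rfl⟩ this

lemma Vt.R {K : PCS} {u e c : K.X} (h : K.Vt u e) (he : K.Fc e c) : K.R c (K.ex false e) u := by
  obtain ⟨p, hp, rfl⟩ := h.split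
  rw [← hp.lo]
  exact (hp.fc.trans he).R

/-- a face above `u` is a face of the upper cube at `u` -/
lemma Fc.upper {K : PCS} (hK : K.Proper) {e y u q : K.X} (he : K.Fc e y)
    (hR : K.R y u (K.ex false e)) (hq0 : K.ex false q = u) (hq1 : K.ex true q = K.ex true y) :
    K.Fc e q := by
  obtain ⟨f, rfl⟩ := he
  obtain ⟨p, hp, hpv, hu⟩ := hR
  have h1 : p = K.dd (loS (fun i => (f i).getD false)) y := by
    apply proper_uniq hK
    · rw [hp.lo, loS_lo]
    · rw [hpv, loS_hi, ex_dd]; rfl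
  subst h1
  obtain ⟨S, hS⟩ := hu
  obtain ⟨T, h2⟩ : ∃ T : ℕ → Bool, u = K.vx (fun i => (f i).getD false && T i) y := by
    refine ⟨fun i => S (st (loS (fun i => (f i).getD false)) i), ?_⟩
    rw [hS, vx, dd_dd]
    apply dd_congr
    intro i _
    unfold cmp
    beta_reduce
    generalize S (st (loS fun i => (f i).getD false) i) = b
    unfold loS
    beta_reduce
    cases (f i).getD false <;> simp
  have h3 : q = K.dd (hiS (fun i => (f i).getD false && T i)) y := by
    apply proper_uniq hK
    · rw [hq0, hiS_lo, h2]
    · rw [hq1, hiS_hi]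
  rw [h3]
  refine ⟨_, (dd_res K (fun i _ => ?_)).symm⟩
  unfold hiS
  beta_reduce
  generalize T i = b
  cases h : f i with
  | none => simp
  | some d => cases d <;> cases b <;> simp

end PCS
namespace PCS

/-! ### carriers -/

/-- sign of a coordinate -/
noncomputable def sg1 (x : unitInterval) : Option Bool :=
  open Classical in if x = 0 then some false else if x = 1 then some true else none

lemma sg1_bool (ε : Bool) : sg1 (if ε then 1 else 0) = some ε := by
  cases ε <;> simp [sg1]

lemma sg1_some {x : unitInterval} {ε : Bool} (h : sg1 x = some ε) : x = if ε then 1 else 0 := by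
  unfold sg1 at h
  split_ifs at h <;> simp_all

lemma sg1_true {x : unitInterval} : sg1 x = some true ↔ x = 1 := by
  constructor
  · intro h; simpa using sg1_some h
  · rintro rfl; exact sg1_bool true

lemma sg1_false {x : unitInterval} : sg1 x = some false ↔ x = 0 := by
  constructor
  · intro h; simpa using sg1_some h
  · rintro rfl; exact sg1_bool false

/-- signs of a point of a cube -/
noncomputable def sg {n : ℕ} (x : Fin n → unitInterval) : ℕ → Option Bool := extS (fun i => sg1 (x i))

lemma D_ins (K : PCS) (ε : Bool) (f g : ℕ → Option Bool) (i n : ℕ) (hi : i ≤ n)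
    (h1 : ∀ k < i, g k = f k) (h2 : g i = some ε) (h3 : ∀ k, i ≤ k → k < n → g (k + 1) = f k)
    (c : K.X) : K.D n f (K.F ε i c) = K.D (n + 1) g c := by
  induction n generalizing c with
  | zero =>
    obtain rfl : i = 0 := by omega
    rw [D_some K h2]; rfl
  | succ n ih =>
    by_cases hin : i = n + 1
    · subst hin
      rw [D_some K h2]
      exact (D_congr K (fun k hk => (h1 k hk).symm) _)
    · have ih' := ih (by omega) (fun k hk hk' => h3 k hk (by omega))
      have hn := h3 n (by omega) (by omega)
      cases hf : f n with
      | none => rw [D_none K hf, D_none K (hn.trans hf), ih']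
      | some η =>
        rw [D_some K hf, D_some K (hn.trans hf), ← ih', F_comm K ε η i (n + 1) (by omega)]
        rfl

/-- carrier -/
noncomputable def carrP (K : PCS) (z : K.Pre) : K.X := K.dd (sg z.2.2) ⟨z.1, z.2.1⟩

lemma carr_face (K : PCS) {n : ℕ} (ε : Bool) (i : Fin (n + 1)) (c : K.cube (n + 1))
    (t : Fin n → unitInterval) :
    K.carrP ⟨n, K.face ε i c, t⟩ = K.carrP ⟨n + 1, c, i.insertNth (if ε then 1 else 0) t⟩ := by
  unfold carrP dd
  have := F_lt K ε i n c i.2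
  simp only [Fin.eta] at this ⊢
  rw [← this]
  apply D_ins
  · omega
  · intro k hk
    have h1 : k < n + 1 := by omega
    have h2 : k < n := by omega
    simp only [sg, extS, h1, h2, dif_pos]
    have : (⟨k, h1⟩ : Fin (n + 1)) = i.succAbove ⟨k, h2⟩ := by
      rw [Fin.succAbove_of_castSucc_lt]
      · rfl
      · exact hk
    rw [this, Fin.insertNth_apply_succAbove]
  · simp only [sg, extS, i.2, dif_pos, Fin.eta, Fin.insertNth_apply_same, sg1_bool]
  · intro k hk hk'
    have h1 : k + 1 < n + 1 := by omega
    simp only [sg, extS, h1, hk', dif_pos]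
    have : (⟨k + 1, h1⟩ : Fin (n + 1)) = i.succAbove ⟨k, hk'⟩ := by
      rw [Fin.succAbove_of_le_castSucc]
      · rfl
      · exact hk
    rw [this, Fin.insertNth_apply_succAbove]

/-- carrier of a point of the realization -/
noncomputable def carr (K : PCS) (z : K.Geo) : K.X :=
  Quot.lift K.carrP (by
    rintro x y ⟨n, ε, i, c, t, ⟨rfl, rfl⟩ | ⟨rfl, rfl⟩⟩
    · exact carr_face K ε i c t
    · exact (carr_face K ε i c t).symm) z

lemma carr_mk (K : PCS) {n : ℕ} (c : K.cube n) (x : Fin n → unitInterval) :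
    K.carr (Quot.mk K.geoRel ⟨n, c, x⟩) = K.dd (sg x) ⟨n, c⟩ := rfl

/-- geometric cube -/
def cs (K : PCS) (c : K.X) : Set K.Geo := K.cubeSet c.2

lemma cs_F (K : PCS) (ε : Bool) (i : ℕ) (c : K.X) : K.cs (K.F ε i c) ⊆ K.cs c := by
  by_cases h : c.1 ≤ i
  · rw [F_ge K ε i c h]
  · obtain ⟨n, c⟩ := c
    cases n with
    | zero => simp at h
    | succ n =>
      rw [F_lt K ε i n c (by simpa using h)]
      rintro _ ⟨t, rfl⟩
      exact ⟨_, (Quot.sound ⟨n, ε, _, c, t, Or.inl ⟨rfl, rfl⟩⟩).symm⟩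

lemma cs_D (K : PCS) (n : ℕ) (f : ℕ → Option Bool) (c : K.X) : K.cs (K.D n f c) ⊆ K.cs c := by
  induction n generalizing c with
  | zero => exact subset_rfl
  | succ n ih =>
    cases hf : f n with
    | none => rw [D_none K hf]; exact ih c
    | some ε => rw [D_some K hf]; exact (ih _).trans (cs_F K ε n c)

lemma Fc.cs {K : PCS} {e c : K.X} (h : K.Fc e c) : K.cs e ⊆ K.cs c := by
  obtain ⟨f, rfl⟩ := h
  exact cs_D K _ f c

lemma mem_cs_D (K : PCS) (m : ℕ) (f : ℕ → Option Bool) (n : ℕ) (c : K.cube n)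
    (x : Fin n → unitInterval) (hm : m ≤ n)
    (h : ∀ i (hi : i < m), ∀ ε, f i = some ε → x ⟨i, by omega⟩ = if ε then 1 else 0) :
    Quot.mk K.geoRel ⟨n, c, x⟩ ∈ K.cs (K.D m f ⟨n, c⟩) := by
  induction m generalizing n with
  | zero => exact ⟨x, rfl⟩
  | succ m ih =>
    cases hf : f m with
    | none =>
      rw [D_none K hf]
      exact ih n c x (by omega) (fun i hi => h i (by omega))
    | some ε =>
      obtain _ | n := n
      · omega
      have hx := h m (by omega) ε hf
      rw [D_some K hf, F_lt K ε m n c (by omega)]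
      have hq : Quot.mk K.geoRel ⟨n + 1, c, x⟩ = Quot.mk K.geoRel
          ⟨n, K.face ε ⟨m, by omega⟩ c, (⟨m, by omega⟩ : Fin (n + 1)).removeNth x⟩ := by
        apply Quot.sound
        refine ⟨n, ε, ⟨m, by omega⟩, c, (⟨m, by omega⟩ : Fin (n + 1)).removeNth x,
          Or.inr ⟨rfl, ?_⟩⟩
        rw [← hx, Fin.insertNth_self_removeNth]
      rw [hq]
      apply ih n _ _ (by omega)
      intro i hi η hη
      rw [← h i (by omega) η hη]
      simp only [Fin.removeNth]
      congr 1
      rw [Fin.succAbove_of_castSucc_lt]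
      · rfl
      · exact hi

lemma mem_cs_carr (K : PCS) (z : K.Geo) : z ∈ K.cs (K.carr z) := by
  induction z using Quot.ind with
  | mk z =>
    obtain ⟨n, c, x⟩ := z
    apply mem_cs_D K n _ n c x le_rfl
    intro i hi ε h
    simp only [sg, extS, hi, dif_pos] at h
    exact sg1_some h

lemma mem_cs_iff (K : PCS) (z : K.Geo) (c : K.X) : z ∈ K.cs c ↔ K.Fc (K.carr z) c := by
  constructor
  · rintro ⟨x, rfl⟩
    exact ⟨_, carr_mk K c.2 x⟩
  · intro h
    exact h.cs (mem_cs_carr K z)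

/-! ### heights -/

lemma ht_F {K : PCS} {h : ∀ {n : ℕ}, K.cube n → ℤ} (hh : K.IsHeight h) (ε : Bool) (i : ℕ) (c : K.X)
    (hi : i < c.1) : h (K.F ε i c).2 = h c.2 + (if ε then 1 else 0) := by
  obtain ⟨n, c⟩ := c
  obtain _ | n := n
  · simp at hi
  · rw [F_lt K ε i n c hi]
    exact hh ε _ c

lemma ht_D {K : PCS} {h : ∀ {n : ℕ}, K.cube n → ℤ} (hh : K.IsHeight h) (ε : Bool) (n : ℕ) (c : K.X)
    (hn : n ≤ c.1) :
    h (K.D n (fun _ => some ε) c).2 = h c.2 + (if ε then (n : ℤ) else 0) := by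
  induction n generalizing c with
  | zero => simp [D]
  | succ n ih =>
    have := F_dim K ε n c (by omega)
    rw [D_some K rfl, ih _ (by omega), ht_F hh ε n c (by omega)]
    cases ε <;> simp
    ring

lemma ht_extreme {K : PCS} {h : ∀ {n : ℕ}, K.cube n → ℤ} (hh : K.IsHeight h) (ε : Bool) {n : ℕ}
    (c : K.cube n) : h (K.extreme ε c) = h c + (if ε then (n : ℤ) else 0) := by
  have h1 := ht_D hh ε n ⟨n, c⟩ le_rfl
  have h2 := extreme_eq K ε c
  unfold ex dd at h2
  rw [← h2] at h1
  exact h1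

/-- at top height, a natural path is at the top vertex -/
lemma carr_top {K : PCS} {h : ∀ {n : ℕ}, K.cube n → ℤ} {β : ℝ → K.Geo} {N : ℕ}
    (hn : K.NaturalOn h β 0 N) {s : ℝ} (hs : s ∈ Set.Icc (0 : ℝ) N) (c : K.X)
    (hm : β s ∈ K.cs c) (hc : (h c.2 : ℝ) + c.1 = s) : K.carr (β s) = K.ex true c := by
  obtain ⟨n, c⟩ := c
  obtain ⟨x, hx⟩ := hm
  have h1 := hn s hs n c x hx
  simp only at hc
  have h2 : ∑ i, (1 - (x i : ℝ)) = 0 := by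
    rw [Finset.sum_sub_distrib]
    simp
    linarith
  have h3 := (Finset.sum_eq_zero_iff_of_nonneg (fun i _ => by linarith [(x i).2.2])).1 h2
  rw [← hx, carr_mk]
  apply dd_congr
  intro i hi
  simp only at hi
  simp only [sg, extS, hi, dif_pos, sg1_true]
  have := h3 ⟨i, hi⟩ (Finset.mem_univ _)
  apply Subtype.ext
  rw [Set.Icc.coe_one]
  linarith

/-! ### the path lemma -/

/-- lower vertex of the carrier -/
noncomputable def lam (K : PCS) (z : K.Geo) : K.X := K.ex false (K.carr z)

lemma lam_mk (K : PCS) {n : ℕ} (c : K.cube n) (x : Fin n → unitInterval) :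
    K.lam (Quot.mk K.geoRel ⟨n, c, x⟩) = K.vx (fun i => (sg x i).getD false) ⟨n, c⟩ := by
  exact ex_dd K false (sg x) ⟨n, c⟩

lemma Vt.R_refl {K : PCS} {u c : K.X} (h : K.Vt u c) : K.R c u u := by
  obtain ⟨p, hp, rfl⟩ := h.split
  exact ⟨p, hp, rfl, ⟨fun _ => true, rfl⟩⟩

lemma getD_sg1 (x : unitInterval) : (sg1 x).getD false = true ↔ x = 1 := by
  rw [← sg1_true]
  cases sg1 x <;> simp

lemma lam_eq_of (K : PCS) {n : ℕ} (c : K.cube n) (x y : Fin n → unitInterval)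
    (hxy : ∀ i, x i = 1 ↔ y i = 1) :
    K.lam (Quot.mk K.geoRel ⟨n, c, x⟩) = K.lam (Quot.mk K.geoRel ⟨n, c, y⟩) := by
  rw [lam_mk, lam_mk]
  apply dd_congr
  intro i hi
  simp only at hi
  simp only [sg, extS, hi, dif_pos, Option.some.injEq]
  rw [Bool.eq_iff_iff, getD_sg1, getD_sg1, hxy]

lemma R_of_left {K : PCS} {n : ℕ} (c : K.cube n) (x y : Fin n → unitInterval) (d : K.X)
    (h1 : ∀ i, x i = 1 → y i = 1) (h0 : ∀ i, x i = 0 → y i = 0)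
    (hd : K.Fc (K.carr (Quot.mk K.geoRel ⟨n, c, x⟩)) d) :
    K.R d (K.lam (Quot.mk K.geoRel ⟨n, c, x⟩)) (K.lam (Quot.mk K.geoRel ⟨n, c, y⟩)) := by
  refine Vt.R ?_ hd
  rw [lam_mk, carr_mk]
  set T : ℕ → Option Bool := fun i => some ((sg y i).getD false) with hT
  refine ⟨fun k => (res T (sg x) k).getD false, ?_⟩
  have := dd_res K (f := T) (g := sg x) (c := ⟨n, c⟩) (by
    intro i hi
    simp only at hi
    cases hx : sg x i with
    | none => simp
    | some b =>
      right
      simp only [sg, extS, hi, dif_pos] at hx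
      simp only [hT, sg, extS, hi, dif_pos, Option.some.injEq]
      cases b with
      | false => rw [sg1_false.2 (h0 _ (sg1_false.1 hx))]; rfl
      | true => rw [sg1_true.2 (h1 _ (sg1_true.1 hx))]; rfl)
  unfold vx
  rw [← this]
  apply dd_congr
  intro i _
  simp [res, hT]

lemma fin_find_right {m : ℕ} (t : Fin (m + 1) → ℝ) (s : ℝ) (h0 : t 0 ≤ s)
    (hl : s < t (Fin.last m)) : ∃ j : Fin m, t j.castSucc ≤ s ∧ s < t j.succ := by
  by_contra hc
  push Not at hc
  have : ∀ j : Fin (m + 1), t j ≤ s := by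
    intro j
    induction j using Fin.induction with
    | zero => exact h0
    | succ j ih => exact hc j ih
  linarith [this (Fin.last m)]

lemma fin_find_left {m : ℕ} (t : Fin (m + 1) → ℝ) (s : ℝ) (h0 : t 0 < s)
    (hl : s ≤ t (Fin.last m)) : ∃ j : Fin m, t j.castSucc < s ∧ s ≤ t j.succ := by
  by_contra hc
  push Not at hc
  have : ∀ j : Fin (m + 1), t j < s := by
    intro j
    induction j using Fin.induction with
    | zero => exact h0
    | succ j ih => exact hc j ih
  linarith [this (Fin.last m)]

lemma exists_delta {n : ℕ} (x : Fin n → ℝ) (hx : ∀ i, 0 ≤ x i) :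
    ∃ δ > 0, ∀ i, x i ≠ 0 → δ ≤ x i := by
  induction n with
  | zero => exact ⟨1, one_pos, fun i => i.elim0⟩
  | succ n ih =>
    obtain ⟨δ, hδ, h⟩ := ih (fun i => x i.succ) (fun i => hx _)
    by_cases h0 : x 0 = 0
    · refine ⟨δ, hδ, fun i => ?_⟩
      refine Fin.cases ?_ (fun j => h j) i
      simp [h0]
    · refine ⟨min δ (x 0), lt_min hδ (lt_of_le_of_ne (hx 0) (Ne.symm h0)), fun i => ?_⟩
      refine Fin.cases ?_ (fun j hj => (min_le_left _ _).trans (h j hj)) i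
      intro _; exact min_le_right _ _

/-- monotone with unit-speed sum implies 1-Lipschitz -/
lemma lip {n : ℕ} (x y : Fin n → unitInterval) (d : ℝ) (hxy : ∀ i, (x i : ℝ) ≤ y i)
    (hs : ∑ i, (y i : ℝ) - ∑ i, (x i : ℝ) = d) (i : Fin n) : (y i : ℝ) - x i ≤ d := by
  rw [← hs, ← Finset.sum_sub_distrib]
  exact Finset.single_le_sum (f := fun i => (y i : ℝ) - x i)
    (fun i _ => by linarith [hxy i]) (Finset.mem_univ i)

lemma local_right {K : PCS} {h : ∀ {n : ℕ}, K.cube n → ℤ} {β : ℝ → K.Geo} {N : ℕ}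
    (hd : K.IsDPathOn β 0 N) (hn : K.NaturalOn h β 0 N) {s : ℝ} (h0 : 0 ≤ s) (hs : s < N) :
    ∃ δ > 0, ∀ s', s < s' → s' < s + δ → K.lam (β s') = K.lam (β s) := by
  obtain ⟨_, m, t, ht, ht0, htl, hp⟩ := hd
  obtain ⟨j, hj1, hj2⟩ := fin_find_right t s (ht0 ▸ h0) (htl ▸ hs)
  obtain ⟨n, c, b, hmono, hb⟩ := hp j
  have hj3 : 0 ≤ t j.castSucc := ht0 ▸ ht (Fin.zero_le _)
  have hj4 : t j.succ ≤ N := htl ▸ ht (Fin.le_last _)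
  obtain ⟨δ, hδ, hδ'⟩ := exists_delta (fun i => 1 - (b s i : ℝ)) (fun i => by linarith [(b s i).2.2])
  refine ⟨min δ (t j.succ - s), lt_min hδ (by linarith), fun s' hs1 hs2 => ?_⟩
  have hs3 : s' < s + δ := hs2.trans_le (by linarith [min_le_left δ (t j.succ - s)])
  have hs4 : s' < t j.succ := by linarith [min_le_right δ (t j.succ - s)]
  have m1 : s ∈ Set.Icc (t j.castSucc) (t j.succ) := ⟨hj1, hj2.le⟩
  have m2 : s' ∈ Set.Icc (t j.castSucc) (t j.succ) := ⟨by linarith, hs4.le⟩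
  have e1 := hn s ⟨h0, hs.le⟩ n c (b s) (hb s m1).symm
  have e2 := hn s' ⟨by linarith, by linarith⟩ n c (b s') (hb s' m2).symm
  have mono : ∀ i, (b s i : ℝ) ≤ b s' i := fun i => hmono i m1 m2 hs1.le
  have hl := lip (b s) (b s') (s' - s) mono (by linarith)
  rw [hb s m1, hb s' m2]
  apply lam_eq_of
  intro i
  constructor
  · intro hi
    by_contra hne
    have := hδ' i (fun h => hne (Subtype.ext (by rw [Set.Icc.coe_one]; linarith)))
    have := hl i
    rw [hi, Set.Icc.coe_one] at this
    linarith
  · intro hi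
    have := mono i
    rw [hi, Set.Icc.coe_one] at this
    exact Subtype.ext (by rw [Set.Icc.coe_one]; linarith [(b s' i).2.2])

lemma local_left {K : PCS} {h : ∀ {n : ℕ}, K.cube n → ℤ} {β : ℝ → K.Geo} {N : ℕ}
    (hd : K.IsDPathOn β 0 N) (hn : K.NaturalOn h β 0 N) {s : ℝ} (h0 : 0 < s) (hs : s ≤ N) :
    ∃ δ > 0, ∀ s', s' < s → s - δ < s' → ∀ d : K.X, K.Fc (K.carr (β s')) d →
      K.R d (K.lam (β s')) (K.lam (β s)) := by
  obtain ⟨_, m, t, ht, ht0, htl, hp⟩ := hd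
  obtain ⟨j, hj1, hj2⟩ := fin_find_left t s (ht0 ▸ h0) (htl ▸ hs)
  obtain ⟨n, c, b, hmono, hb⟩ := hp j
  have hj3 : 0 ≤ t j.castSucc := ht0 ▸ ht (Fin.zero_le _)
  have hj4 : t j.succ ≤ N := htl ▸ ht (Fin.le_last _)
  obtain ⟨δ, hδ, hδ'⟩ := exists_delta (fun i => (b s i : ℝ)) (fun i => (b s i).2.1)
  refine ⟨min δ (s - t j.castSucc), lt_min hδ (by linarith), fun s' hs1 hs2 d hFc => ?_⟩
  have hs3 : s - δ < s' := by linarith [min_le_left δ (s - t j.castSucc)]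
  have hs4 : t j.castSucc < s' := by linarith [min_le_right δ (s - t j.castSucc)]
  have m1 : s ∈ Set.Icc (t j.castSucc) (t j.succ) := ⟨hj1.le, hj2⟩
  have m2 : s' ∈ Set.Icc (t j.castSucc) (t j.succ) := ⟨hs4.le, by linarith⟩
  have e1 := hn s ⟨h0.le, hs⟩ n c (b s) (hb s m1).symm
  have e2 := hn s' ⟨by linarith, by linarith⟩ n c (b s') (hb s' m2).symm
  have mono : ∀ i, (b s' i : ℝ) ≤ b s i := fun i => hmono i m2 m1 hs1.le
  have hl := lip (b s') (b s) (s - s') mono (by linarith)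
  rw [hb s' m2] at hFc
  rw [hb s m1, hb s' m2]
  apply R_of_left _ _ _ _ _ _ hFc
  · intro i hi
    have := mono i
    rw [hi, Set.Icc.coe_one] at this
    exact Subtype.ext (by rw [Set.Icc.coe_one]; linarith [(b s i).2.2])
  · intro i hi
    by_contra hne
    have := hδ' i (fun h => hne (Subtype.ext (by rw [Set.Icc.coe_zero]; linarith)))
    have := hl i
    rw [hi, Set.Icc.coe_zero] at this
    linarith

lemma path_R {K : PCS} (hK : K.Proper) {h : ∀ {n : ℕ}, K.cube n → ℤ} {β : ℝ → K.Geo} {N : ℕ}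
    (hd : K.IsDPathOn β 0 N) (hn : K.NaturalOn h β 0 N) {a b : ℝ} (ha : 0 ≤ a) (hb : b ≤ N)
    (y : K.X) (hy : ∀ s ∈ Set.Icc a b, K.Fc (K.carr (β s)) y) (s : ℝ) (hs : s ∈ Set.Icc a b) :
    K.R y (K.lam (β a)) (K.lam (β s)) := by
  by_contra hbad
  set B : Set ℝ := {s | s ∈ Set.Icc a b ∧ ¬ K.R y (K.lam (β a)) (K.lam (β s))} with hB
  have hne : B.Nonempty := ⟨s, hs, hbad⟩
  have hbd : BddBelow B := ⟨a, fun x hx => hx.1.1⟩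
  set σ := sInf B with hσ
  have hσ1 : a ≤ σ := le_csInf hne fun x hx => hx.1.1
  have hσ2 : σ ≤ b := (csInf_le hbd ⟨hs, hbad⟩).trans hs.2
  have hlt : ∀ x, a ≤ x → x < σ → K.R y (K.lam (β a)) (K.lam (β x)) := by
    intro x hx hx'
    by_contra hc
    have : σ ≤ x := csInf_le hbd ⟨⟨hx, by linarith⟩, hc⟩
    linarith
  have hgood : K.R y (K.lam (β a)) (K.lam (β σ)) := by
    rcases hσ1.eq_or_lt with heq | hl
    · rw [← heq]
      apply Vt.R_refl
      exact Vt.fc ⟨fun _ => false, rfl⟩ (hy a ⟨le_rfl, by linarith⟩)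
    · obtain ⟨δ, hδ, hδ'⟩ := local_left hd hn (s := σ) (by linarith) (by linarith)
      set s' := max a (σ - δ / 2) with hs'
      have h1 : s' < σ := max_lt hl (by linarith)
      have h2 : σ - δ < s' := lt_of_lt_of_le (by linarith) (le_max_right _ _)
      have h3 : a ≤ s' := le_max_left _ _
      exact (hlt s' h3 h1).trans hK (hδ' s' h1 h2 y (hy s' ⟨h3, by linarith⟩))
  rcases hσ2.eq_or_lt with heq | hl
  · have : s = σ := le_antisymm (by rw [heq]; exact hs.2) (csInf_le hbd ⟨hs, hbad⟩)
    rw [this] at hbad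
    exact hbad hgood
  · obtain ⟨δ, hδ, hδ'⟩ := local_right hd hn (s := σ) (by linarith) (by linarith)
    obtain ⟨x, hx, hx'⟩ := exists_lt_of_csInf_lt hne (show sInf B < σ + δ by linarith)
    have : σ ≤ x := csInf_le hbd hx
    rcases this.eq_or_lt with heq | hl'
    · rw [← heq] at hx; exact hx.2 hgood
    · apply hx.2
      rw [hδ' x hl' hx']
      exact hgood

end PCS
namespace PCS

/-- total dimension -/
def tot {K : PCS} (l : List (Σ n, K.cube (n + 1))) : ℕ := (l.map fun c => c.1 + 1).sum

/-- forget positivity of the dimension -/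
def toX {K : PCS} (x : Σ n, K.cube (n + 1)) : K.X := ⟨x.1 + 1, x.2⟩

lemma tot_nil {K : PCS} : tot ([] : List (Σ n, K.cube (n + 1))) = 0 := rfl

lemma tot_cons {K : PCS} (x : Σ n, K.cube (n + 1)) (l : List (Σ n, K.cube (n + 1))) :
    tot (x :: l) = x.1 + 1 + tot l := by simp [tot]

lemma tot_append {K : PCS} (l l' : List (Σ n, K.cube (n + 1))) :
    tot (l ++ l') = tot l + tot l' := by simp [tot]

/-- recursive version of `liesIn` -/
def liesFrom {K : PCS} (β : ℝ → K.Geo) : ℝ → List (Σ n, K.cube (n + 1)) → Prop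
  | _, [] => True
  | a, x :: l => (∀ s ∈ Set.Icc a (a + (x.1 + 1)), β s ∈ K.cs (toX x)) ∧
      liesFrom β (a + (x.1 + 1)) l

lemma liesFrom_iff {K : PCS} (β : ℝ → K.Geo) (a : ℝ) (l : List (Σ n, K.cube (n + 1))) :
    (∀ (i : ℕ) (hi : i < l.length), Set.MapsTo β (Set.Icc (a + bsum l i) (a + bsum l (i + 1)))
      (K.cubeSet (l.get ⟨i, hi⟩).2)) ↔ liesFrom β a l := by
  induction l generalizing a with
  | nil => simp [liesFrom]
  | cons x l ih =>
    have hb : ∀ i, bsum (x :: l) (i + 1) = (x.1 + 1) + bsum l i := by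
      intro i; simp [bsum]
    rw [liesFrom, ← ih]
    constructor
    · intro H
      refine ⟨?_, ?_⟩
      · have := H 0 (by simp)
        intro s hs
        apply this
        rw [hb]
        simpa [bsum] using hs
      · intro i hi
        have := H (i + 1) (by simpa using hi)
        rw [hb, hb, ← add_assoc a (_ + _) (bsum l i), ← add_assoc a (_ + _) (bsum l (i + 1))] at this
        exact this
    · rintro ⟨H0, H⟩ i hi
      cases i with
      | zero =>
        intro s hs
        apply H0
        rw [hb] at hs
        simpa [bsum] using hs
      | succ i =>
        rw [hb, hb, ← add_assoc a (_ + _) (bsum l i), ← add_assoc a (_ + _) (bsum l (i + 1))]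
        exact H i (by simpa using hi)

lemma liesIn_iff {K : PCS} (β : ℝ → K.Geo) (l : List (Σ n, K.cube (n + 1))) :
    K.liesIn β l ↔ liesFrom β 0 l := by
  rw [← liesFrom_iff]
  simp only [zero_add]
  rfl

lemma liesFrom_append {K : PCS} (β : ℝ → K.Geo) (a : ℝ) (l l' : List (Σ n, K.cube (n + 1))) :
    liesFrom β a (l ++ l') ↔ liesFrom β a l ∧ liesFrom β (a + tot l) l' := by
  induction l generalizing a with
  | nil => simp [liesFrom, tot]
  | cons x l ih =>
    simp only [List.cons_append, liesFrom, ih, tot_cons]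
    push_cast
    rw [and_assoc, ← add_assoc a (_ + 1)]

lemma chainFrom_append {K : PCS} (v w : K.cube 0) (l l' : List (Σ n, K.cube (n + 1))) :
    K.chainFrom v (l ++ l') w ↔ ∃ u, K.chainFrom v l u ∧ K.chainFrom u l' w := by
  induction l generalizing v with
  | nil => simp [chainFrom]
  | cons x l ih => simp only [List.cons_append, chainFrom, ih]; grind

lemma chain_ht {K : PCS} {h : ∀ {n : ℕ}, K.cube n → ℤ} (hh : K.IsHeight h) (v w : K.cube 0)
    (l : List (Σ n, K.cube (n + 1))) (hc : K.chainFrom v l w) : h w = h v + tot l := by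
  induction l generalizing v with
  | nil => simp only [chainFrom] at hc; subst hc; simp [tot]
  | cons x l ih =>
    obtain ⟨rfl, hc⟩ := hc
    rw [ih _ hc, ht_extreme hh, ht_extreme hh, tot_cons]
    push_cast
    simp
    ring

lemma vtx_inj {K : PCS} {a b : K.cube 0} (h : (⟨0, a⟩ : K.X) = ⟨0, b⟩) : a = b :=
  eq_of_heq (Sigma.mk.inj h).2

lemma isSplit_of {K : PCS} (x y q : Σ n, K.cube (n + 1)) (S : ℕ → Bool)
    (hx : toX x = K.dd (loS S) (toX y)) (hq : toX q = K.dd (hiS S) (toX y))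
    (h0 : K.vx S (toX y) ≠ K.ex false (toX y)) (h1 : K.vx S (toX y) ≠ K.ex true (toX y)) :
    K.IsSplit y.2 x q := by
  obtain ⟨n, y⟩ := y
  refine ⟨Finset.univ.filter (fun i => S i = true), ?_, ?_, ?_, ?_⟩
  · intro hA
    apply h0
    apply dd_congr
    intro i hi
    have : (⟨i, hi⟩ : Fin (n + 1)) ∉ Finset.univ.filter (fun i : Fin (n + 1) => S i = true) := by
      rw [hA]; simp
    simpa using this
  · intro hA
    apply h1
    apply dd_congr
    intro i hi
    have : (⟨i, hi⟩ : Fin (n + 1)) ∈ Finset.univ.filter (fun i : Fin (n + 1) => S i = true) := by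
      rw [hA]; simp
    simpa using this
  · have h2 := dface_eq K (fun i : Fin (n + 1) =>
      if i ∈ Finset.univ.filter (fun i : Fin (n + 1) => S i = true) then none else some false) y
    have h3 : K.dd (loS S) (toX ⟨n, y⟩) = _ := (Eq.trans h2 (by
      apply dd_congr
      intro i hi
      have hi' : i < n + 1 := hi
      simp [extS, hi', loS])).symm
    rw [h3] at hx
    exact (Sigma.mk.inj hx).2
  · have h2 := dface_eq K (fun i : Fin (n + 1) =>
      if i ∈ Finset.univ.filter (fun i : Fin (n + 1) => S i = true) then some true else none) y
    have h3 : K.dd (hiS S) (toX ⟨n, y⟩) = _ := (Eq.trans h2 (by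
      apply dd_congr
      intro i hi
      have hi' : i < n + 1 := hi
      simp [extS, hi', hiS])).symm
    rw [h3] at hq
    exact (Sigma.mk.inj hq).2

lemma ht_ex {K : PCS} {h : ∀ {n : ℕ}, K.cube n → ℤ} (hh : K.IsHeight h) (ε : Bool) (c : K.X) :
    h (K.ex ε c).2 = h c.2 + (if ε then (c.1 : ℤ) else 0) := ht_D hh ε c.1 c le_rfl

/-- common data at a position of a chain -/
lemma chain_at {K : PCS} {h : ∀ {n : ℕ}, K.cube n → ℤ} (hh : K.IsHeight h)
    {v w : K.cube 0} {N : ℕ} (hv : h v = 0) (hw : h w = N)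
    {pre l : List (Σ n, K.cube (n + 1))} {x : Σ n, K.cube (n + 1)}
    (hc : K.chainFrom v (pre ++ x :: l) w) :
    h x.2 = tot pre ∧ tot pre + (x.1 + 1) ≤ N := by
  obtain ⟨u, h1, h2, h3⟩ := (chainFrom_append _ _ _ _).1 hc
  have a1 := chain_ht hh _ _ _ h1
  have a2 := chain_ht hh _ _ _ h3
  have a3 := ht_extreme hh false x.2
  have a4 := ht_extreme hh true x.2
  simp at a3 a4
  rw [h2] at a3
  constructor <;> omega

lemma carr_at {K : PCS} {h : ∀ {n : ℕ}, K.cube n → ℤ} (hh : K.IsHeight h)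
    {v w : K.cube 0} {N : ℕ} (hv : h v = 0) (hw : h w = N)
    {pre l : List (Σ n, K.cube (n + 1))} {x : Σ n, K.cube (n + 1)}
    (hc : K.chainFrom v (pre ++ x :: l) w) {β : ℝ → K.Geo} (hβ : K.NatTamePath h v w N β)
    (hl : liesFrom β (tot pre) (x :: l)) :
    K.carr (β (tot pre + (x.1 + 1))) = K.ex true (toX x) := by
  obtain ⟨h1, h2⟩ := chain_at hh hv hw hc
  have h2' : (tot pre : ℝ) + (x.1 + 1) ≤ N := by exact_mod_cast h2
  apply carr_top hβ.2.2.2.1 ⟨by positivity, h2'⟩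
  · exact hl.1 _ ⟨by linarith [(Nat.cast_nonneg x.1 : (0 : ℝ) ≤ x.1)], le_rfl⟩
  · simp only [toX, h1]
    push_cast
    ring

lemma lo_same {K : PCS} {h : ∀ {n : ℕ}, K.cube n → ℤ}
    {v w : K.cube 0} {pre l l' : List (Σ n, K.cube (n + 1))} {x y : Σ n, K.cube (n + 1)}
    (hc : K.chainFrom v (pre ++ x :: l) w) (hc' : K.chainFrom v (pre ++ y :: l') w) :
    K.extreme false x.2 = K.extreme false y.2 := by
  obtain ⟨u, h1, h2, h3⟩ := (chainFrom_append _ _ _ _).1 hc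
  obtain ⟨u', h1', h2', h3'⟩ := (chainFrom_append _ _ _ _).1 hc'
  have : u = u' := by
    clear hc hc' h2 h2' h3 h3'
    induction pre generalizing v with
    | nil => exact h1.symm.trans h1'
    | cons z p ih => exact ih h1.2 h1'.2
  rw [h2, h2', this]

lemma step {K : PCS} (hK : K.Proper) {h : ∀ {n : ℕ}, K.cube n → ℤ} (hh : K.IsHeight h)
    {v w : K.cube 0} {N : ℕ} (hv : h v = 0) (hw : h w = N)
    {pre l l' : List (Σ n, K.cube (n + 1))} {x y : Σ n, K.cube (n + 1)}
    (hc : K.chainFrom v (pre ++ x :: l) w) (hc' : K.chainFrom v (pre ++ y :: l') w)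
    (hxy : x.1 < y.1) {α : ℝ → K.Geo} (hα : K.NatTamePath h v w N α)
    (hl : K.liesIn α (pre ++ x :: l)) (hl' : K.liesIn α (pre ++ y :: l')) :
    ∃ q, K.IsSplit y.2 x q ∧ K.chainFrom v (pre ++ x :: q :: l') w ∧
      ∀ β, K.NatTamePath h v w N β →
        (K.liesIn β (pre ++ x :: l) ∧ K.liesIn β (pre ++ y :: l') ↔
          K.liesIn β (pre ++ x :: l) ∧ K.liesIn β (pre ++ x :: q :: l')) := by
  have hlo : K.ex false (toX x) = K.ex false (toX y) := by
    have := lo_same (h := h) hc hc'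
    have e1 := extreme_eq K false x.2
    have e2 := extreme_eq K false y.2
    rw [this] at e1
    exact e1.symm.trans e2
  obtain ⟨hx1, hx2⟩ := chain_at hh hv hw hc
  obtain ⟨hy1, hy2⟩ := chain_at hh hv hw hc'
  have hxy' : (x.1 : ℝ) + 1 ≤ y.1 + 1 := by
    have : (x.1 : ℝ) ≤ y.1 := by exact_mod_cast hxy.le
    linarith
  have hx0 : (0 : ℝ) ≤ x.1 := by positivity
  simp only [liesIn_iff, liesFrom_append, zero_add] at hl hl' ⊢
  have hu := carr_at hh hv hw hc hα hl.2
  have hmem := hl'.2.1 (tot pre + (x.1 + 1)) ⟨by linarith, by linarith⟩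
  rw [mem_cs_iff, hu] at hmem
  have hV : K.Vt (K.ex true (toX x)) (toX y) := by
    have h1 : K.Vt (K.ex true (toX x)) (K.ex true (toX x)) := by
      refine ⟨fun _ => false, ?_⟩
      have : (K.ex true (toX x)).1 = 0 := by rw [toX, ← extreme_eq]
      unfold vx dd
      rw [this]; rfl
    exact h1.fc hmem
  obtain ⟨S, hS⟩ := hV
  have hxS : toX x = K.dd (loS S) (toX y) := by
    apply proper_uniq hK
    · rw [loS_lo, hlo]
    · rw [loS_hi, hS]
  -- heights
  have t1 : h (K.ex true (toX x)).2 = tot pre + (x.1 + 1) := by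
    rw [ht_ex hh]; simp [toX, hx1]
  have t2 : h (K.ex false (toX y)).2 = tot pre := by
    rw [ht_ex hh]; simp [toX, hy1]
  have t3 : h (K.ex true (toX y)).2 = tot pre + (y.1 + 1) := by
    rw [ht_ex hh]; simp [toX, hy1]
  obtain ⟨q, hq⟩ : ∃ q, q = K.dd (hiS S) (toX y) := ⟨_, rfl⟩
  have q0 : K.ex false q = K.ex true (toX x) := by rw [hq, hiS_lo, hS]
  have q1 : K.ex true q = K.ex true (toX y) := by rw [hq, hiS_hi]
  have t4 := ht_ex hh false q
  have t5 := ht_ex hh true q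
  rw [q0, t1] at t4
  rw [q1, t3] at t5
  simp at t4 t5
  have hqd : (q.1 : ℤ) = y.1 - x.1 := by omega
  obtain ⟨nq, q⟩ := q
  obtain _ | nq := nq
  · simp only at hqd; omega
  simp only at hqd
  have hFq : K.Fc (toX ⟨nq, q⟩) (toX y) := ⟨_, hq⟩
  have hFx : K.Fc (toX x) (toX y) := ⟨_, hxS⟩
  have hqR : (tot pre : ℝ) + (x.1 + 1) + (nq + 1) = tot pre + (y.1 + 1) := by
    have : ((nq : ℤ) : ℝ) + 1 = (y.1 : ℤ) - (x.1 : ℤ) := by exact_mod_cast hqd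
    push_cast at this
    linarith
  refine ⟨⟨nq, q⟩, ?_, ?_, ?_⟩
  · apply isSplit_of x y ⟨nq, q⟩ S hxS hq
    · rw [← hS]; intro e; rw [e] at t1; omega
    · rw [← hS]; intro e; rw [e] at t1; omega
  · obtain ⟨u, h1, h2, h3⟩ := (chainFrom_append _ _ _ _).1 hc
    obtain ⟨u', h1', h2', h3'⟩ := (chainFrom_append _ _ _ _).1 hc'
    rw [chainFrom_append]
    refine ⟨u, h1, h2, ?_, ?_⟩
    · apply vtx_inj
      rw [extreme_eq, extreme_eq]
      exact q0
    · have : K.extreme true q = K.extreme true y.2 := by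
        apply vtx_inj
        rw [extreme_eq, extreme_eq]
        exact q1
      simp only
      rw [this]
      exact h3'
  · intro β hβ
    constructor
    · rintro ⟨hb, hb'⟩
      refine ⟨hb, hb.1, hb.2.1, ?_, ?_⟩
      · intro s hs
        simp only at hs
        rw [hqR] at hs
        have hcu := carr_at hh hv hw hc hβ hb.2
        have hy2' : (tot pre : ℝ) + (y.1 + 1) ≤ N := by exact_mod_cast hy2
        have hR := path_R hK hβ.1 hβ.2.2.2.1 (a := tot pre + (x.1 + 1)) (b := tot pre + (y.1 + 1))
          (by positivity) hy2' (toX y)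
          (fun s hs => (mem_cs_iff K _ _).1 (hb'.2.1 s ⟨by linarith [hs.1], hs.2⟩)) s hs
        rw [mem_cs_iff]
        have hFs := (mem_cs_iff K _ _).1 (hb'.2.1 s ⟨by linarith [hs.1], hs.2⟩)
        refine hFs.upper hK hR ?_ q1
        rw [lam, hcu]
        refine q0.trans ?_
        have : (K.ex true (toX x)).1 = 0 := by rw [toX, ← extreme_eq]
        unfold ex dd at this ⊢
        rw [this]; rfl
      · simp only
        rw [hqR]
        exact hb'.2.2
    · rintro ⟨hb, hb'⟩
      refine ⟨hb, hb.1, ?_, ?_⟩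
      · intro s hs
        by_cases hsx : s ≤ tot pre + (x.1 + 1)
        · exact hFx.cs (hb'.2.1 s ⟨hs.1, hsx⟩)
        · apply hFq.cs
          apply hb'.2.2.1 s
          refine ⟨by linarith, ?_⟩
          simp only
          rw [hqR]; exact hs.2
      · have := hb'.2.2.2
        simp only at this
        rw [hqR] at this
        exact this

lemma main {K : PCS} (hK : K.Proper) {h : ∀ {n : ℕ}, K.cube n → ℤ} (hh : K.IsHeight h)
    {v w : K.cube 0} {N : ℕ} (hv : h v = 0) (hw : h w = N) {α : ℝ → K.Geo}
    (hα : K.NatTamePath h v w N α) (d : ℕ) :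
    ∀ (c c' : CubeChain K v w) (pre l l' : List (Σ n, K.cube (n + 1))),
      N ≤ tot pre + d → c.1 = pre ++ l → c'.1 = pre ++ l' →
      K.liesIn α c.1 → K.liesIn α c'.1 →
      ∃ cc : CubeChain K v w, chainLe cc c ∧ chainLe cc c' ∧
        ∀ β : ℝ → K.Geo, K.NatTamePath h v w N β →
          (K.liesIn β cc.1 ↔ K.liesIn β c.1 ∧ K.liesIn β c'.1) := by
  induction d with
  | zero =>
    intro c c' pre l l' hN hc hc' _ _
    have e1 := chain_ht hh _ _ _ c.2
    have e2 := chain_ht hh _ _ _ c'.2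
    rw [hc, tot_append] at e1
    rw [hc', tot_append] at e2
    have z : ∀ l : List (Σ n, K.cube (n + 1)), tot l = 0 → l = [] := by
      intro l hl
      cases l with
      | nil => rfl
      | cons x l => rw [tot_cons] at hl; omega
    have : c = c' := Subtype.ext (by rw [hc, hc', z l (by omega), z l' (by omega)])
    subst this
    exact ⟨c, .refl, .refl, by simp⟩
  | succ d ih =>
    intro c c' pre l l' hN hc hc' hl hl'
    have e1 := chain_ht hh _ _ _ c.2
    have e2 := chain_ht hh _ _ _ c'.2
    rw [hc, tot_append] at e1
    rw [hc', tot_append] at e2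
    obtain _ | ⟨x, l⟩ := l
    · obtain _ | ⟨y, l'⟩ := l'
      · have : c = c' := Subtype.ext (by rw [hc, hc'])
        subst this
        exact ⟨c, .refl, .refl, by simp⟩
      · rw [tot_nil] at e1; rw [tot_cons] at e2; omega
    obtain _ | ⟨y, l'⟩ := l'
    · rw [tot_nil] at e2; rw [tot_cons] at e1; omega
    obtain ⟨c, pc⟩ := c
    obtain ⟨c', pc'⟩ := c'
    simp only at hc hc' hl hl' ⊢
    subst hc hc'
    rcases lt_trichotomy x.1 y.1 with hxy | hxy | hxy
    · obtain ⟨q, hsp, hch, hiff⟩ := step hK hh hv hw pc pc' hxy hα hl hl'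
      obtain ⟨cc, h1, h2, h3⟩ := ih ⟨_, pc⟩ ⟨_, hch⟩ (pre ++ [x]) l (q :: l')
        (by rw [tot_append, tot_cons, tot_nil]; omega) (by simp) (by simp) hl
        ((hiff α hα).1 ⟨hl, hl'⟩).2
      refine ⟨cc, h1, h2.tail ⟨pre, l', y, x, q, rfl, rfl, hsp⟩, ?_⟩
      intro β hβ
      rw [h3 β hβ, hiff β hβ]
    · have hxy2 : x = y := by
        have hlo := lo_same (h := h) pc pc'
        simp only [liesIn_iff, liesFrom_append, zero_add] at hl hl'
        have h1 := carr_at hh hv hw pc hα hl.2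
        have h2 := carr_at hh hv hw pc' hα hl'.2
        rw [hxy, h2] at h1
        have : toX x = toX y := by
          apply proper_uniq hK _ h1.symm
          have e1 := extreme_eq K false x.2
          have e2 := extreme_eq K false y.2
          rw [hlo] at e1
          exact e1.symm.trans e2
        obtain ⟨n, x⟩ := x
        obtain ⟨m, y⟩ := y
        simp only at hxy
        subst hxy
        have hxy3 : x = y := eq_of_heq (Sigma.mk.inj this).2
        rw [hxy3]
      subst hxy2
      exact ih ⟨_, pc⟩ ⟨_, pc'⟩ (pre ++ [x]) l l'
        (by rw [tot_append, tot_cons, tot_nil]; omega) (by simp) (by simp) hl hl'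
    · obtain ⟨q, hsp, hch, hiff⟩ := step hK hh hv hw pc' pc hxy hα hl' hl
      obtain ⟨cc, h1, h2, h3⟩ := ih ⟨_, hch⟩ ⟨_, pc'⟩ (pre ++ [y]) (q :: l) l'
        (by rw [tot_append, tot_cons, tot_nil]; omega) (by simp) (by simp)
        ((hiff α hα).1 ⟨hl', hl⟩).2 hl'
      refine ⟨cc, h1.tail ⟨pre, l, x, y, q, rfl, rfl, hsp⟩, h2, ?_⟩
      intro β hβ
      rw [h3 β hβ, and_comm, ← hiff β hβ, and_comm]

end PCS

/-- If some natural tame path lies in both cube chains `c`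
and `c'`, then there is a cube chain `c ∩ c'` from `v` to `w`, with
`c ∩ c' ≤ c` and `c ∩ c' ≤ c'`, such that a natural tame path lies in
`c ∩ c'` iff it lies in both `c` and `c'`. -/
theorem stmt9 (K : PCS) (hfin : Finite (Σ n, K.cube n)) (hK : K.Proper)
    (h : ∀ {n : ℕ}, K.cube n → ℤ) (hh : K.IsHeight h)
    (v w : K.cube 0) (N : ℕ) (hv : h v = 0) (hw : h w = N)
    (c c' : CubeChain K v w) (α : ℝ → K.Geo)
    (hα : K.NatTamePath h v w N α) (h1 : K.liesIn α c.1) (h2 : K.liesIn α c'.1) :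
    ∃ cc : CubeChain K v w, chainLe cc c ∧ chainLe cc c' ∧
      ∀ β : ℝ → K.Geo, K.NatTamePath h v w N β →
        (K.liesIn β cc.1 ↔ K.liesIn β c.1 ∧ K.liesIn β c'.1) := by
  exact PCS.main hK hh hv hw hα N c c' [] c.1 c'.1 (by simp [PCS.tot]) rfl rfl h1 h2
end

section
/- Every natural tame path from v to w in a finite proper pre-cubical set with height function lies in some cube chain from v to w; i.e., the sets N(K,c) for c∈Ch(K)_v^w cover the space of natural tame paths. -/
/-- The vertex of a cube `c` with Boolean coordinates `g`. -/
def PCS.vert (K : PCS) : ∀ {n : ℕ}, K.cube n → (Fin n → Bool) → K.cube 0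
  | 0, c, _ => c
  | n + 1, c, g => K.vert (K.face (g (Fin.last n)) (Fin.last n) c) (g ∘ Fin.castSucc)

lemma PCS.vert_face (K : PCS) : ∀ {n : ℕ} (ε : Bool) (i : Fin (n + 1)) (c : K.cube (n + 1))
    (g : Fin n → Bool), K.vert (K.face ε i c) g = K.vert c (i.insertNth ε g)
  | 0, ε, i, c, g => by
      have hi : i = Fin.last 0 := by
        apply Fin.ext
        have := i.isLt
        simp only [Fin.val_last]
        omega
      subst hi
      simp only [PCS.vert]
      simp
  | n + 1, ε, i, c, g => by
      rcases Fin.eq_castSucc_or_eq_last i with ⟨j, rfl⟩ | rfl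
      · rw [PCS.vert, PCS.vert]
        have h1 : (j.castSucc.insertNth ε g : Fin (n + 2) → Bool) (Fin.last (n + 1))
            = g (Fin.last n) := by
          have : Fin.last (n + 1) = j.castSucc.succAbove (Fin.last n) := by
            rw [Fin.succAbove_of_le_castSucc]
            · simp
            · simpa using Fin.le_last j
          rw [this, Fin.insertNth_apply_succAbove]
        have h2 : (j.castSucc.insertNth ε g : Fin (n + 2) → Bool) ∘ Fin.castSucc
            = j.insertNth ε (g ∘ Fin.castSucc) := by
          rw [Fin.eq_insertNth_iff]
          constructor
          · simp
          · funext k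
            have : (j.succAbove k).castSucc = j.castSucc.succAbove k.castSucc := by
              simp [Fin.succAbove, Fin.ext_iff, Fin.lt_def]
              split_ifs <;> simp
            simp only [Fin.removeNth, Function.comp_apply, this,
              Fin.insertNth_apply_succAbove]
        rw [h1, h2, ← PCS.vert_face K ε j]
        congr 1
        have := K.comm ε (g (Fin.last n)) j (Fin.last (n + 1))
          (by have := j.isLt; simp only [Fin.val_last]; omega) c
        rw [this]
        rfl
      · rw [PCS.vert.eq_2 K (n + 1) c]
        have h1 : ((Fin.last (n + 1)).insertNth ε g : Fin (n + 2) → Bool) (Fin.last (n + 1))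
            = ε := by simp
        have h2 : ((Fin.last (n + 1)).insertNth ε g : Fin (n + 2) → Bool) ∘ Fin.castSucc
            = g := by
          funext k
          simp
        rw [h1, h2]

lemma PCS.dfaceAux_heq (K : PCS) (ε : Bool) : ∀ (n : ℕ) (c : K.cube n),
    HEq (K.dfaceAux n 0 (fun _ => some ε) c) (K.vert c (fun _ => ε))
  | 0, c => by
      simp only [PCS.dfaceAux, PCS.vert]
      exact cast_heq _ _
  | n + 1, c => by
      simp only [PCS.dfaceAux, PCS.vert]
      refine (cast_heq _ _).trans ?_
      exact PCS.dfaceAux_heq K ε n _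

lemma PCS.extreme_eq_s11 (K : PCS) (ε : Bool) {n : ℕ} (c : K.cube n) :
    K.extreme ε c = K.vert c (fun _ => ε) := by
  apply eq_of_heq
  unfold PCS.extreme PCS.dface
  refine (cast_heq _ _).trans ((cast_heq _ _).trans ?_)
  exact K.dfaceAux_heq ε n c

/-- The cube point with Boolean coordinates. -/
def bpt (ε : Bool) : unitInterval := if ε then 1 else 0

lemma PCS.mk_face (K : PCS) {n : ℕ} (ε : Bool) (i : Fin (n + 1)) (c : K.cube (n + 1))
    (t : Fin n → unitInterval) :
    (Quot.mk K.geoRel ⟨n, K.face ε i c, t⟩ : K.Geo) =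
      Quot.mk K.geoRel ⟨n + 1, c, i.insertNth (bpt ε) t⟩ :=
  Quot.sound ⟨n, ε, i, c, t, Or.inl ⟨rfl, rfl⟩⟩

lemma PCS.mk_vert (K : PCS) : ∀ {n : ℕ} (c : K.cube n) (g : Fin n → Bool),
    (Quot.mk K.geoRel ⟨n, c, fun i => bpt (g i)⟩ : K.Geo) = K.vpt (K.vert c g)
  | 0, c, g => by
      unfold PCS.vpt
      rw [PCS.vert]
      congr 3
      exact Subsingleton.elim _ _
  | n + 1, c, g => by
      rw [PCS.vert, ← PCS.mk_vert K, PCS.mk_face]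
      congr 3
      symm
      rw [Fin.insertNth_eq_iff]
      constructor
      · rfl
      · funext k
        simp [Fin.removeNth]

/-- lower Boolean corner of the carrier -/
noncomputable def lowB {n : ℕ} (x : Fin n → unitInterval) : Fin n → Bool := fun i => decide (x i = 1)
/-- upper Boolean corner of the carrier -/
noncomputable def upB {n : ℕ} (x : Fin n → unitInterval) : Fin n → Bool := fun i => decide (x i ≠ 0)

lemma lowB_le_upB {n : ℕ} (x : Fin n → unitInterval) : lowB x ≤ upB x := by
  intro i
  unfold lowB upB
  by_cases hx : x i = 1
  · simp [hx]
  · simp [hx]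

lemma lowB_insertNth {n : ℕ} (ε : Bool) (i : Fin (n + 1)) (t : Fin n → unitInterval) :
    lowB (i.insertNth (bpt ε) t : Fin (n + 1) → unitInterval) = i.insertNth ε (lowB t) := by
  rw [Fin.eq_insertNth_iff]
  constructor
  · cases ε <;> simp [lowB, bpt]
  · funext k; simp [lowB, Fin.removeNth]

lemma upB_insertNth {n : ℕ} (ε : Bool) (i : Fin (n + 1)) (t : Fin n → unitInterval) :
    upB (i.insertNth (bpt ε) t : Fin (n + 1) → unitInterval) = i.insertNth ε (upB t) := by
  rw [Fin.eq_insertNth_iff]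
  constructor
  · cases ε <;> simp [upB, bpt]
  · funext k; simp [upB, Fin.removeNth]

/-- lower vertex of the carrier of a point -/
noncomputable def PCS.low (K : PCS) : K.Geo → K.cube 0 :=
  Quot.lift (fun p : K.Pre => K.vert p.2.1 (lowB p.2.2)) (by
    rintro x y ⟨n, ε, i, c, t, ⟨rfl, rfl⟩ | ⟨rfl, rfl⟩⟩
    · exact (K.vert_face ε i c _).trans (congrArg _ (lowB_insertNth ε i t).symm)
    · exact ((K.vert_face ε i c _).trans (congrArg _ (lowB_insertNth ε i t).symm)).symm)

/-- upper vertex of the carrier of a point -/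
noncomputable def PCS.up (K : PCS) : K.Geo → K.cube 0 :=
  Quot.lift (fun p : K.Pre => K.vert p.2.1 (upB p.2.2)) (by
    rintro x y ⟨n, ε, i, c, t, ⟨rfl, rfl⟩ | ⟨rfl, rfl⟩⟩
    · exact (K.vert_face ε i c _).trans (congrArg _ (upB_insertNth ε i t).symm)
    · exact ((K.vert_face ε i c _).trans (congrArg _ (upB_insertNth ε i t).symm)).symm)

lemma PCS.low_mk (K : PCS) {n : ℕ} (c : K.cube n) (x : Fin n → unitInterval) :
    K.low (Quot.mk K.geoRel ⟨n, c, x⟩) = K.vert c (lowB x) := rfl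
lemma PCS.up_mk (K : PCS) {n : ℕ} (c : K.cube n) (x : Fin n → unitInterval) :
    K.up (Quot.mk K.geoRel ⟨n, c, x⟩) = K.vert c (upB x) := rfl
lemma PCS.low_vpt (K : PCS) (u : K.cube 0) : K.low (K.vpt u) = u := rfl
lemma PCS.up_vpt (K : PCS) (u : K.cube 0) : K.up (K.vpt u) = u := rfl

/-- Existence of the face spanned by `P ≤ Q`. -/
lemma PCS.face_exists (K : PCS) : ∀ (n : ℕ) (c : K.cube n) (P Q : Fin n → Bool), P ≤ Q →
    ∃ (m : ℕ) (k : K.cube m) (e : (Fin m → Bool) → (Fin n → Bool)), Monotone e ∧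
      e (fun _ => false) = P ∧ e (fun _ => true) = Q ∧ (∀ g, K.vert k g = K.vert c (e g)) ∧
      (∀ L M, P ≤ L → L ≤ M → M ≤ Q → ∃ L' M', L' ≤ M' ∧ e L' = L ∧ e M' = M) ∧
      (∀ x : Fin n → unitInterval, P ≤ lowB x → upB x ≤ Q →
        (Quot.mk K.geoRel ⟨n, c, x⟩ : K.Geo) ∈ K.cubeSet k) ∧
      K.cubeSet k ⊆ K.cubeSet c := by
  intro n
  induction n with
  | zero =>
    intro c P Q _
    refine ⟨0, c, id, monotone_id, Subsingleton.elim _ _, Subsingleton.elim _ _, fun _ => rfl,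
      fun L M _ h _ => ⟨L, M, h, rfl, rfl⟩, fun x _ _ => ⟨x, rfl⟩, subset_rfl⟩
  | succ n ih =>
    intro c P Q hPQ
    by_cases hi : ∃ i, P i = Q i
    · obtain ⟨i, hi⟩ := hi
      obtain ⟨m, k, e, he, he0, he1, hv, hs, hx, hsub⟩ :=
        ih (K.face (P i) i c) (i.removeNth P) (i.removeNth Q) (fun j => hPQ _)
      have key : ∀ L : Fin (n + 1) → Bool, P ≤ L → L ≤ Q → L i = P i := fun L h1 h2 =>
        le_antisymm ((h2 i).trans hi.ge) (h1 i)
      refine ⟨m, k, fun g => i.insertNth (P i) (e g), ?_, ?_, ?_, ?_, ?_, ?_, ?_⟩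
      · intro a b hab
        rw [Fin.insertNth_le_iff]
        simp only [Fin.insertNth_apply_same, le_refl, true_and]
        intro j
        simpa using he hab j
      · simp only [he0, Fin.insertNth_self_removeNth]
      · simp only [he1, hi, Fin.insertNth_self_removeNth]
      · intro g
        rw [hv, K.vert_face]
      · intro L M h1 h2 h3
        obtain ⟨L', M', h, hL, hM⟩ := hs (i.removeNth L) (i.removeNth M) (fun j => h1 _)
          (fun j => h2 _) (fun j => h3 _)
        refine ⟨L', M', h, ?_, ?_⟩
        · simp only [hL, ← key L h1 (h2.trans h3), Fin.insertNth_self_removeNth]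
        · simp only [hM, ← key M (h1.trans h2) h3, Fin.insertNth_self_removeNth]
      · intro x h1 h2
        have hb : bpt (P i) = x i := by
          have h3 := h1 i
          have h4 := h2 i
          rw [← hi] at h4
          cases hp : P i
          · rw [hp] at h4
            have h5 : upB x i = false := le_antisymm h4 (Bool.false_le _)
            simp only [upB, decide_eq_false_iff_not, not_not] at h5
            simp [bpt, h5]
          · rw [hp] at h3
            have h5 : lowB x i = true := le_antisymm (Bool.le_true _) h3
            simp only [lowB, decide_eq_true_eq] at h5
            simp [bpt, h5]
        have := hx (i.removeNth x) (fun j => h1 _) (fun j => h2 _)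
        rw [K.mk_face, hb, Fin.insertNth_self_removeNth] at this
        exact this
      · refine hsub.trans ?_
        rintro _ ⟨x, rfl⟩
        exact ⟨_, (K.mk_face _ _ _ _).symm⟩
    · push Not at hi
      have hP : (fun _ => false) = P := by
        funext i
        have h1 := hPQ i
        have h2 := hi i
        revert h1 h2
        cases P i <;> cases Q i <;> simp
      have hQ : (fun _ => true) = Q := by
        funext i
        have h1 := hPQ i
        have h2 := hi i
        revert h1 h2
        cases P i <;> cases Q i <;> simp
      refine ⟨n + 1, c, id, monotone_id, hP, hQ, fun _ => rfl,
        fun L M _ h _ => ⟨L, M, h, rfl, rfl⟩, fun x _ _ => ⟨x, rfl⟩, subset_rfl⟩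

/-- Comparison of faces of two cubes with the same extreme vertices. -/
lemma PCS.compare (K : PCS) (hK : K.Proper) {n₁ n₂ : ℕ} (c₁ : K.cube n₁) (c₂ : K.cube n₂)
    (P₁ Q₁ : Fin n₁ → Bool) (P₂ Q₂ : Fin n₂ → Bool) (h₁ : P₁ ≤ Q₁) (h₂ : P₂ ≤ Q₂)
    (hP : K.vert c₁ P₁ = K.vert c₂ P₂) (hQ : K.vert c₁ Q₁ = K.vert c₂ Q₂) :
    (∀ L M, P₁ ≤ L → L ≤ M → M ≤ Q₁ → ∃ L' M', P₂ ≤ L' ∧ L' ≤ M' ∧ M' ≤ Q₂ ∧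
      K.vert c₂ L' = K.vert c₁ L ∧ K.vert c₂ M' = K.vert c₁ M) ∧
    (∀ x : Fin n₁ → unitInterval, P₁ ≤ lowB x → upB x ≤ Q₁ →
        (Quot.mk K.geoRel ⟨n₁, c₁, x⟩ : K.Geo) ∈ K.cubeSet c₂) := by
  obtain ⟨m, k, e, he, he0, he1, hv, hs, hx, hsub⟩ := K.face_exists n₁ c₁ P₁ Q₁ h₁
  obtain ⟨m', k', e', he', he0', he1', hv', hs', hx', hsub'⟩ := K.face_exists n₂ c₂ P₂ Q₂ h₂
  have hkk : (⟨m, k⟩ : Σ n, K.cube n) = ⟨m', k'⟩ := by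
    apply hK
    simp only [PCS.extreme_eq_s11, hv, hv', he0, he1, he0', he1', hP, hQ]
  cases hkk
  constructor
  · intro L M hPL hLM hMQ
    obtain ⟨L', M', hLM', rfl, rfl⟩ := hs L M hPL hLM hMQ
    refine ⟨e' L', e' M', ?_, he' hLM', ?_, ?_, ?_⟩
    · rw [← he0']; exact he' (fun _ => Bool.false_le _)
    · rw [← he1']; exact he' (fun _ => Bool.le_true _)
    · rw [← hv, hv']
    · rw [← hv, hv']
  · intro x h1 h2
    exact hsub' (hx x h1 h2)

/-- `p` precedes `q` within the cube `c`. -/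
def PCS.prec (K : PCS) {n : ℕ} (c : K.cube n) (p q : K.cube 0) : Prop :=
  ∃ P Q : Fin n → Bool, P ≤ Q ∧ K.vert c P = p ∧ K.vert c Q = q

lemma PCS.prec_from (K : PCS) (hK : K.Proper) {n : ℕ} (c : K.cube n) {p q : K.cube 0}
    (h : K.prec c p q) (P : Fin n → Bool) (hP : K.vert c P = p) :
    ∃ Q, P ≤ Q ∧ K.vert c Q = q := by
  obtain ⟨P', Q', hle, hp, hq⟩ := h
  obtain ⟨L, M, h1, h2, h3, h4, h5⟩ := (K.compare hK c c P' (fun _ => true) P (fun _ => true)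
    (fun _ => Bool.le_true _) (fun _ => Bool.le_true _) (hp.trans hP.symm) rfl).1 Q' Q' hle le_rfl
    (fun _ => Bool.le_true _)
  exact ⟨L, h1, h4.trans hq⟩

lemma PCS.prec_trans (K : PCS) (hK : K.Proper) {n : ℕ} (c : K.cube n) {p q r : K.cube 0}
    (h₁ : K.prec c p q) (h₂ : K.prec c q r) : K.prec c p r := by
  obtain ⟨P, Q, hle, hp, hq⟩ := h₁
  obtain ⟨R, hR, hr⟩ := K.prec_from hK c h₂ Q hq
  exact ⟨P, R, hle.trans hR, hp, hr⟩

open Filter Topology in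
lemma chain_of_local (R : ℝ → ℝ → Prop) (a b : ℝ)
    (hrefl : ∀ s ∈ Set.Ioo a b, R s s)
    (htrans : ∀ x y z, R x y → R y z → R x z)
    (hr : ∀ s ∈ Set.Ioo a b, ∀ᶠ t in 𝓝[>] s, t ∈ Set.Ioo a b → R s t)
    (hl : ∀ s ∈ Set.Ioo a b, ∀ᶠ t in 𝓝[<] s, t ∈ Set.Ioo a b → R t s)
    (s t : ℝ) (has : a < s) (hst : s ≤ t) (htb : t < b) : R s t := by
  set S : Set ℝ := {x | x ∈ Set.Icc s t ∧ R s x} with hS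
  have hsS : s ∈ S := ⟨⟨le_rfl, hst⟩, hrefl s ⟨has, hst.trans_lt htb⟩⟩
  have hbdd : BddAbove S := ⟨t, fun x hx => hx.1.2⟩
  set σ := sSup S with hσ
  have h1 : s ≤ σ := le_csSup hbdd hsS
  have h2 : σ ≤ t := csSup_le ⟨s, hsS⟩ fun x hx => hx.1.2
  have hσI : σ ∈ Set.Ioo a b := ⟨has.trans_le h1, h2.trans_lt htb⟩
  have hσS : R s σ := by
    by_contra hcon
    have h3 := hl σ hσI
    rw [eventually_nhdsWithin_iff, Metric.eventually_nhds_iff] at h3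
    obtain ⟨ε, hε, h3⟩ := h3
    obtain ⟨x, hx, hx'⟩ := exists_lt_of_lt_csSup ⟨s, hsS⟩ (show σ - ε < sSup S by linarith)
    have hxσ : x ≤ σ := le_csSup hbdd hx
    rcases hxσ.eq_or_lt with h4 | h4
    · rw [← h4] at hcon
      exact hcon hx.2
    · apply hcon
      refine htrans _ _ _ hx.2 (h3 ?_ h4 ⟨has.trans_le hx.1.1, hx.1.2.trans_lt htb⟩)
      rw [Real.dist_eq, abs_lt]
      constructor <;> linarith
  rcases h2.eq_or_lt with h4 | h4
  · rw [← h4]; exact hσS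
  · exfalso
    have h3 := (hr σ hσI).and (Ioo_mem_nhdsGT h4)
    obtain ⟨x, hx, hx'⟩ := h3.exists
    have : x ≤ σ := le_csSup hbdd ⟨⟨h1.trans hx'.1.le, hx'.2.le⟩,
      htrans _ _ _ hσS (hx ⟨hσI.1.trans hx'.1, hx'.2.trans htb⟩)⟩
    exact absurd hx'.1 (not_lt.mpr this)

lemma piece_right {m : ℕ} (t : Fin (m + 1) → ℝ) (s : ℝ) (h0 : t 0 ≤ s)
    (h1 : s < t (Fin.last m)) : ∃ j : Fin m, t j.castSucc ≤ s ∧ s < t j.succ := by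
  by_contra hcon
  push Not at hcon
  have : ∀ i : Fin (m + 1), t i ≤ s := fun i => by
    induction i using Fin.induction with
    | zero => exact h0
    | succ i ih => exact hcon i ih
  exact absurd h1 (not_lt.mpr (this _))

lemma piece_left {m : ℕ} (t : Fin (m + 1) → ℝ) (s : ℝ) (h0 : t 0 < s)
    (h1 : s ≤ t (Fin.last m)) : ∃ j : Fin m, t j.castSucc < s ∧ s ≤ t j.succ := by
  by_contra hcon
  push Not at hcon
  have : ∀ i : Fin (m + 1), t i < s := fun i => by
    induction i using Fin.induction with
    | zero => exact h0
    | succ i ih => exact hcon i ih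
  exact absurd (this _) (not_lt.mpr h1)

/-- Each coordinate of a natural monotone piece is 1-Lipschitz. -/
lemma coord_lip {n : ℕ} (β : ℝ → Fin n → unitInterval) (p q H : ℝ)
    (hm : ∀ i : Fin n, MonotoneOn (fun s => (β s i : ℝ)) (Set.Icc p q))
    (hs : ∀ s ∈ Set.Icc p q, H + ∑ i, (β s i : ℝ) = s) (s t : ℝ)
    (hsI : s ∈ Set.Icc p q) (htI : t ∈ Set.Icc p q) (hst : s ≤ t) (i : Fin n) :
    (β t i : ℝ) - β s i ≤ t - s := by
  have h1 := hs s hsI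
  have h2 := hs t htI
  have h3 : t - s = ∑ i, ((β t i : ℝ) - β s i) := by
    rw [Finset.sum_sub_distrib]; linarith
  rw [h3]
  exact Finset.single_le_sum (f := fun i => (β t i : ℝ) - β s i)
    (fun j _ => sub_nonneg.mpr (hm j hsI htI hst)) (Finset.mem_univ i)

lemma ui_lt_one {x : unitInterval} (h : x ≠ 1) : (x : ℝ) < 1 :=
  lt_of_le_of_ne x.2.2 (fun h' => h (Subtype.ext h'))
lemma ui_pos {x : unitInterval} (h : x ≠ 0) : 0 < (x : ℝ) :=
  lt_of_le_of_ne x.2.1 (fun h' => h (Subtype.ext h'.symm))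

lemma lowB_mono {n : ℕ} {x y : Fin n → unitInterval} (h : ∀ i, (x i : ℝ) ≤ y i) :
    lowB x ≤ lowB y := by
  intro i
  by_cases hx : x i = 1
  · have : y i = 1 := by
      by_contra hy
      have h1 := ui_lt_one hy
      have h2 := h i
      rw [hx] at h2
      simp at h2
      linarith
    simp [lowB, hx, this]
  · simp [lowB, hx]

lemma upB_mono {n : ℕ} {x y : Fin n → unitInterval} (h : ∀ i, (x i : ℝ) ≤ y i) :
    upB x ≤ upB y := by
  intro i
  by_cases hy : y i = 0
  · have : x i = 0 := by
      by_contra hx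
      have h1 := ui_pos hx
      have h2 := h i
      rw [hy] at h2
      simp at h2
      linarith
    simp [upB, hy, this]
  · simp [upB, hy]

open Filter Topology in
lemma PCS.local_right_s11 (K : PCS) (h : ∀ {n : ℕ}, K.cube n → ℤ) (α : ℝ → K.Geo) (A B : ℝ)
    (hd : K.IsDPathOn α A B) (hn : K.NaturalOn h α A B) (s : ℝ) (hA : A ≤ s) (hB : s < B) :
    ∀ᶠ t in 𝓝[>] s, ∃ (n : ℕ) (c : K.cube n) (x y : Fin n → unitInterval),
      α s = Quot.mk K.geoRel ⟨n, c, x⟩ ∧ α t = Quot.mk K.geoRel ⟨n, c, y⟩ ∧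
      lowB x = lowB y ∧ upB x ≤ upB y := by
  obtain ⟨-, m, t, ht, h0, hl, hp⟩ := hd
  obtain ⟨j, hj1, hj2⟩ := piece_right t s (h0.le.trans hA) (hB.trans_le hl.ge)
  obtain ⟨n, c, β, hm, hα⟩ := hp j
  have hsub : ∀ x ∈ Set.Icc (t j.castSucc) (t j.succ), x ∈ Set.Icc A B := fun x hx =>
    ⟨h0 ▸ (ht (Fin.zero_le _)).trans hx.1, hl ▸ hx.2.trans (ht (Fin.le_last _))⟩
  have hH : ∀ x ∈ Set.Icc (t j.castSucc) (t j.succ), (h c : ℝ) + ∑ i, (β x i : ℝ) = x :=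
    fun x hx => hn x (hsub x hx) n c (β x) (hα x hx).symm
  have hsI : s ∈ Set.Icc (t j.castSucc) (t j.succ) := ⟨hj1, hj2.le⟩
  have hev : ∀ᶠ r in 𝓝[>] s, ∀ i, β s i ≠ 1 → r < s + (1 - β s i) := by
    rw [eventually_all]
    intro i
    by_cases hi : β s i = 1
    · exact Eventually.of_forall fun _ h => absurd hi h
    · have := ui_lt_one hi
      filter_upwards [Ioo_mem_nhdsGT (show s < s + (1 - β s i) by linarith)] with r hr _
      exact hr.2
  filter_upwards [hev, Ioo_mem_nhdsGT hj2] with r hr hr'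
  have hrI : r ∈ Set.Icc (t j.castSucc) (t j.succ) := ⟨hj1.trans hr'.1.le, hr'.2.le⟩
  have hmono : ∀ i, (β s i : ℝ) ≤ β r i := fun i => hm i hsI hrI hr'.1.le
  refine ⟨n, c, β s, β r, hα s hsI, hα r hrI, le_antisymm (lowB_mono hmono) ?_, upB_mono hmono⟩
  intro i
  by_cases hi : β s i = 1
  · have : lowB (β s) i = true := by simp [lowB, hi]
    rw [this]; exact Bool.le_true _
  · have h1 := coord_lip β _ _ _ hm hH s r hsI hrI hr'.1.le i
    have h2 := hr i hi
    have : β r i ≠ 1 := by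
      intro h3
      rw [h3] at h1
      simp at h1
      linarith
    have : lowB (β r) i = false := by simp [lowB, this]
    rw [this]; exact Bool.false_le _

open Filter Topology in
lemma PCS.local_left_s11 (K : PCS) (h : ∀ {n : ℕ}, K.cube n → ℤ) (α : ℝ → K.Geo) (A B : ℝ)
    (hd : K.IsDPathOn α A B) (hn : K.NaturalOn h α A B) (s : ℝ) (hA : A < s) (hB : s ≤ B) :
    ∀ᶠ t in 𝓝[<] s, ∃ (n : ℕ) (c : K.cube n) (x y : Fin n → unitInterval),
      α t = Quot.mk K.geoRel ⟨n, c, x⟩ ∧ α s = Quot.mk K.geoRel ⟨n, c, y⟩ ∧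
      lowB x ≤ lowB y ∧ upB x = upB y := by
  obtain ⟨-, m, t, ht, h0, hl, hp⟩ := hd
  obtain ⟨j, hj1, hj2⟩ := piece_left t s (h0.le.trans_lt hA) (hB.trans hl.ge)
  obtain ⟨n, c, β, hm, hα⟩ := hp j
  have hsub : ∀ x ∈ Set.Icc (t j.castSucc) (t j.succ), x ∈ Set.Icc A B := fun x hx =>
    ⟨h0 ▸ (ht (Fin.zero_le _)).trans hx.1, hl ▸ hx.2.trans (ht (Fin.le_last _))⟩
  have hH : ∀ x ∈ Set.Icc (t j.castSucc) (t j.succ), (h c : ℝ) + ∑ i, (β x i : ℝ) = x :=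
    fun x hx => hn x (hsub x hx) n c (β x) (hα x hx).symm
  have hsI : s ∈ Set.Icc (t j.castSucc) (t j.succ) := ⟨hj1.le, hj2⟩
  have hev : ∀ᶠ r in 𝓝[<] s, ∀ i, β s i ≠ 0 → s - β s i < r := by
    rw [eventually_all]
    intro i
    by_cases hi : β s i = 0
    · exact Eventually.of_forall fun _ h => absurd hi h
    · have := ui_pos hi
      filter_upwards [Ioo_mem_nhdsLT (show s - β s i < s by linarith)] with r hr _
      exact hr.1
  filter_upwards [hev, Ioo_mem_nhdsLT hj1] with r hr hr'
  have hrI : r ∈ Set.Icc (t j.castSucc) (t j.succ) := ⟨hr'.1.le, hr'.2.le.trans hj2⟩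
  have hmono : ∀ i, (β r i : ℝ) ≤ β s i := fun i => hm i hrI hsI hr'.2.le
  refine ⟨n, c, β r, β s, hα r hrI, hα s hsI, lowB_mono hmono, le_antisymm (upB_mono hmono) ?_⟩
  intro i
  by_cases hi : β s i = 0
  · have : upB (β s) i = false := by simp [upB, hi]
    rw [this]; exact Bool.false_le _
  · have h1 := coord_lip β _ _ _ hm hH r s hrI hsI hr'.2.le i
    have h2 := hr i hi
    have : β r i ≠ 0 := by
      intro h3
      rw [h3] at h1
      simp at h1
      linarith
    have : upB (β r) i = true := by simp [upB, this]
    rw [this]; exact Bool.le_true _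

open Filter Topology in
lemma PCS.segment (K : PCS) (hK : K.Proper) (h : ∀ {n : ℕ}, K.cube n → ℤ) (α : ℝ → K.Geo)
    (A B : ℝ) (hd : K.IsDPathOn α A B) (hn : K.NaturalOn h α A B) (a b : ℝ) (hA : A ≤ a)
    (hab : a < b) (hB : b ≤ B) (u u' : K.cube 0) (hu : α a = K.vpt u) (hu' : α b = K.vpt u')
    {n : ℕ} (c : K.cube n) (hc : ∀ s ∈ Set.Ioo a b, α s ∈ K.cubeSet c) :
    ∃ (m : ℕ) (k : K.cube m), K.extreme false k = u ∧ K.extreme true k = u' ∧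
      Set.MapsTo α (Set.Icc a b) (K.cubeSet k) := by
  have hR := chain_of_local (fun s t => K.prec c (K.low (α s)) (K.low (α t)) ∧
    K.prec c (K.up (α s)) (K.up (α t))) a b
    (by
      intro s hs
      obtain ⟨x, hx⟩ := hc s hs
      rw [← hx]
      exact ⟨⟨_, _, le_rfl, rfl, rfl⟩, ⟨_, _, le_rfl, rfl, rfl⟩⟩)
    (fun x y z h1 h2 => ⟨K.prec_trans hK c h1.1 h2.1, K.prec_trans hK c h1.2 h2.2⟩)
    (by
      intro s hs
      filter_upwards [K.local_right_s11 h α A B hd hn s (hA.trans hs.1.le) (hs.2.trans_le hB)]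
      rintro t ⟨n₁, c₁, x, y, hx, hy, hl, hup⟩ htI
      obtain ⟨z, hz⟩ := hc t htI
      have e1 : K.vert c₁ (lowB y) = K.vert c (lowB z) := by
        rw [← K.low_mk, ← K.low_mk, ← hy, ← hz]
      have e2 : K.vert c₁ (upB y) = K.vert c (upB z) := by
        rw [← K.up_mk, ← K.up_mk, ← hy, ← hz]
      obtain ⟨L, M, h1, h2, h3, h4, h5⟩ := (K.compare hK c₁ c _ _ _ _ (lowB_le_upB y)
        (lowB_le_upB z) e1 e2).1 (upB x) (upB x) (hl ▸ lowB_le_upB x) le_rfl hup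
      constructor
      · refine ⟨lowB z, lowB z, le_rfl, ?_, ?_⟩
        · rw [hx, K.low_mk, hl, e1]
        · rw [hy, K.low_mk, e1]
      · refine ⟨M, upB z, h3, ?_, ?_⟩
        · rw [hx, K.up_mk, h5]
        · rw [hy, K.up_mk, e2])
    (by
      intro s hs
      filter_upwards [K.local_left_s11 h α A B hd hn s (hA.trans_lt hs.1) (hs.2.le.trans hB)]
      rintro t ⟨n₁, c₁, x, y, hx, hy, hl, hup⟩ htI
      obtain ⟨z, hz⟩ := hc t htI
      have e1 : K.vert c₁ (lowB x) = K.vert c (lowB z) := by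
        rw [← K.low_mk, ← K.low_mk, ← hx, ← hz]
      have e2 : K.vert c₁ (upB x) = K.vert c (upB z) := by
        rw [← K.up_mk, ← K.up_mk, ← hx, ← hz]
      obtain ⟨L, M, h1, h2, h3, h4, h5⟩ := (K.compare hK c₁ c _ _ _ _ (lowB_le_upB x)
        (lowB_le_upB z) e1 e2).1 (lowB y) (lowB y) hl le_rfl (hup ▸ lowB_le_upB y)
      constructor
      · refine ⟨lowB z, L, h1, ?_, ?_⟩
        · rw [hx, K.low_mk, e1]
        · rw [hy, K.low_mk, h4]
      · refine ⟨upB z, upB z, le_rfl, ?_, ?_⟩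
        · rw [hx, K.up_mk, e2]
        · rw [hy, K.up_mk, ← hup, e2])
  have hlow : ∀ s ∈ Set.Ioo a b, K.prec c u (K.low (α s)) := by
    intro s hs
    obtain ⟨t, ⟨n₁, c₁, x, y, hx, hy, hl, hup⟩, ht⟩ :=
      ((K.local_right_s11 h α A B hd hn a hA (hab.trans_le hB)).and (Ioo_mem_nhdsGT hs.1)).exists
    have h1 := (hR t s ht.1 ht.2.le hs.2).1
    have h2 : K.low (α t) = u := by
      rw [hy, K.low_mk, ← hl, ← K.low_mk, ← hx, hu, K.low_vpt]
    rwa [h2] at h1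
  have hupp : ∀ s ∈ Set.Ioo a b, K.prec c (K.up (α s)) u' := by
    intro s hs
    obtain ⟨t, ⟨n₁, c₁, x, y, hx, hy, hl, hup⟩, ht⟩ :=
      ((K.local_left_s11 h α A B hd hn b (hA.trans_lt hab) hB).and (Ioo_mem_nhdsLT hs.2)).exists
    have h1 := (hR s t hs.1 ht.1.le ht.2).2
    have h2 : K.up (α t) = u' := by
      rw [hx, K.up_mk, hup, ← K.up_mk, ← hy, hu', K.up_vpt]
    rwa [h2] at h1
  have hmid : ∀ s ∈ Set.Ioo a b, K.prec c (K.low (α s)) (K.up (α s)) := by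
    intro s hs
    obtain ⟨x, hx⟩ := hc s hs
    rw [← hx]
    exact ⟨_, _, lowB_le_upB x, rfl, rfl⟩
  obtain ⟨P, Q, hPQ, hP, hQ⟩ : K.prec c u u' := by
    have hs : (a + b) / 2 ∈ Set.Ioo a b := ⟨by linarith, by linarith⟩
    exact K.prec_trans hK c (hlow _ hs) (K.prec_trans hK c (hmid _ hs) (hupp _ hs))
  obtain ⟨m, k, e, -, he0, he1, hv, -, -, -⟩ := K.face_exists n c P Q hPQ
  have k0 : K.vert k (fun _ => false) = u := by rw [hv, he0, hP]
  have k1 : K.vert k (fun _ => true) = u' := by rw [hv, he1, hQ]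
  refine ⟨m, k, ?_, ?_, ?_⟩
  · rw [K.extreme_eq_s11, k0]
  · rw [K.extreme_eq_s11, k1]
  · intro s hs
    rcases hs.1.eq_or_lt with rfl | has
    · rw [hu, ← k0, ← K.mk_vert]
      exact ⟨_, rfl⟩
    rcases hs.2.eq_or_lt with rfl | hsb
    · rw [hu', ← k1, ← K.mk_vert]
      exact ⟨_, rfl⟩
    have hsI : s ∈ Set.Ioo a b := ⟨has, hsb⟩
    obtain ⟨L, hPL, hL⟩ := K.prec_from hK c (hlow s hsI) P hP
    obtain ⟨M, hLM, hM⟩ := K.prec_from hK c (hmid s hsI) L hL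
    obtain ⟨Q', hMQ, hQ'⟩ := K.prec_from hK c (hupp s hsI) M hM
    obtain ⟨x, hx⟩ := hc s hsI
    obtain ⟨L', M', -, h2, -, h4, h5⟩ := (K.compare hK c k P Q' (fun _ => false) (fun _ => true)
      (hPL.trans (hLM.trans hMQ)) (fun _ => Bool.false_le _) (hP.trans k0.symm)
      (hQ'.trans k1.symm)).1 L M hPL hLM hMQ
    rw [← hx]
    refine (K.compare hK c k (lowB x) (upB x) L' M' (lowB_le_upB x) h2 ?_ ?_).2 x le_rfl le_rfl
    · rw [h4, hL, ← hx, K.low_mk]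
    · rw [h5, hM, ← hx, K.up_mk]

/-- A stretch of a tame path without interior vertices lies in a single cube. -/
lemma PCS.tame_cube (K : PCS) (hfin : Finite (Σ n, K.cube n)) (α : ℝ → K.Geo)
    (A B : ℝ) (ht : K.TameOn α A B) (a b : ℝ) (hA : A ≤ a)
    (hab : a < b) (hB : b ≤ B) (hno : ∀ s ∈ Set.Ioo a b, ∀ u, α s ≠ K.vpt u) :
    ∃ c : Σ n, K.cube n, ∀ s ∈ Set.Ioo a b, α s ∈ K.cubeSet c.2 := by
  set δ : ℕ → ℝ := fun i => (b - a) / (i + 3) with hδ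
  have hpos : 0 < b - a := by linarith
  have hδ0 : ∀ i, 0 < δ i := fun i => by positivity
  have hδ1 : ∀ i, δ i < (b - a) / 2 := fun i => by
    apply div_lt_div_of_pos_left hpos (by norm_num)
    have : (0 : ℝ) ≤ i := Nat.cast_nonneg i
    linarith
  have hex : ∀ i, ∃ c : Σ n, K.cube n,
      Set.MapsTo α (Set.Icc (a + δ i) (b - δ i)) (K.cubeSet c.2) := by
    intro i
    have h0 := hδ0 i
    have h1 := hδ1 i
    rcases ht (a + δ i) (b - δ i) (by linarith) (by linarith) (by linarith) with
      ⟨n, c, hc⟩ | ⟨u, s, hs, hsu⟩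
    · exact ⟨⟨n, c⟩, hc⟩
    · exact absurd hsu (hno s ⟨by linarith [hs.1], by linarith [hs.2]⟩ u)
  choose f hf using hex
  obtain ⟨c, hc⟩ := Finite.exists_infinite_fiber f
  have hinf : (f ⁻¹' {c}).Infinite := Set.infinite_coe_iff.mp hc
  refine ⟨c, fun s hs => ?_⟩
  have hη : 0 < min (s - a) (b - s) := lt_min (by linarith [hs.1]) (by linarith [hs.2])
  obtain ⟨i₀, hi₀⟩ := exists_nat_gt ((b - a) / min (s - a) (b - s))
  obtain ⟨i, hi, hii⟩ := hinf.exists_gt i₀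
  have hlt : δ i < min (s - a) (b - s) := by
    rw [hδ]
    have h3 : (i₀ : ℝ) < i := by exact_mod_cast hii
    have h4 : (0 : ℝ) ≤ i := Nat.cast_nonneg i
    rw [div_lt_iff₀ (by linarith)]
    rw [div_lt_iff₀ hη] at hi₀
    nlinarith
  have h5 := hlt.trans_le (min_le_left _ _)
  have h6 := hlt.trans_le (min_le_right _ _)
  have := hf i (show s ∈ Set.Icc (a + δ i) (b - δ i) from ⟨by linarith, by linarith⟩)
  rw [show f i = c from hi] at this
  exact this

lemma PCS.chain_exists (K : PCS) (hfin : Finite (Σ n, K.cube n)) (hK : K.Proper)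
    (h : ∀ {n : ℕ}, K.cube n → ℤ) (w : K.cube 0) (N : ℕ)
    (α : ℝ → K.Geo) (hd : K.IsDPathOn α 0 N) (hw : α N = K.vpt w)
    (hn : K.NaturalOn h α 0 N) (ht : K.TameOn α 0 N) :
    ∀ (d k : ℕ) (u : K.cube 0), k + d = N → α k = K.vpt u →
      ∃ cs : List (Σ n, K.cube (n + 1)), K.chainFrom u cs w ∧
        ∀ (i : ℕ) (hi : i < cs.length),
          Set.MapsTo α (Set.Icc (k + bsum cs i) (k + bsum cs (i + 1)))
            (K.cubeSet (cs.get ⟨i, hi⟩).2) := by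
  classical
  intro d
  induction d using Nat.strong_induction_on with
  | _ d ih =>
  intro k u hkd hu
  rcases Nat.eq_zero_or_pos d with rfl | hdpos
  · refine ⟨[], ?_, fun i hi => absurd hi (by simp)⟩
    have : k = N := by omega
    subst this
    show u = w
    rw [← K.low_vpt u, ← hu, hw, K.low_vpt]
  have hP : ∃ e : ℕ, 0 < e ∧ ∃ u', α ((k + e : ℕ) : ℝ) = K.vpt u' :=
    ⟨d, hdpos, w, by rw [hkd]; exact hw⟩
  set e := Nat.find hP with he
  obtain ⟨hepos, u', hu'⟩ := Nat.find_spec hP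
  have hed : e ≤ d := Nat.find_min' hP ⟨hdpos, w, by rw [hkd]; exact hw⟩
  have hmin : ∀ e' : ℕ, 0 < e' → e' < e → ∀ u', α ((k + e' : ℕ) : ℝ) ≠ K.vpt u' := by
    intro e' h1 h2 u' h3
    exact Nat.find_min hP h2 ⟨h1, u', h3⟩
  rw [← he] at hepos hu'
  have hk0 : (0 : ℝ) ≤ k := Nat.cast_nonneg k
  have hke : (k : ℝ) < ((k + e : ℕ) : ℝ) := by exact_mod_cast (by omega : k < k + e)
  have hkN : ((k + e : ℕ) : ℝ) ≤ N := by exact_mod_cast (by omega : k + e ≤ N)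
  have hno : ∀ s ∈ Set.Ioo (k : ℝ) ((k + e : ℕ) : ℝ), ∀ u, α s ≠ K.vpt u := by
    intro s hs u₁ hsu
    have h1 := hn s ⟨hk0.trans hs.1.le, hs.2.le.trans hkN⟩ 0 u₁ Fin.elim0 hsu.symm
    simp at h1
    obtain ⟨hs1, hs2⟩ := hs
    rw [← h1] at hs1 hs2
    have h2 : (k : ℤ) < h u₁ := by exact_mod_cast hs1
    have h3 : h u₁ < (k + e : ℕ) := by exact_mod_cast hs2
    push_cast at h3
    apply hmin (h u₁ - k).toNat (by omega) (by omega) u₁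
    rw [← hsu, ← h1]
    congr 1
    have : ((k + (h u₁ - k).toNat : ℕ) : ℤ) = h u₁ := by push_cast; omega
    exact_mod_cast congrArg (Int.cast : ℤ → ℝ) this
  obtain ⟨c, hc⟩ := K.tame_cube hfin α 0 N ht k _ hk0 hke hkN hno
  obtain ⟨m, q, hq0, hq1, hqm⟩ := K.segment hK h α 0 N hd hn k _ hk0 hke hkN u u' hu hu' c.2 hc
  have d0 := hn k ⟨hk0, hke.le.trans hkN⟩ m q (fun i => bpt ((fun _ => false) i)) (by
    rw [K.mk_vert, ← K.extreme_eq_s11, hq0, hu])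
  have d1 := hn ((k + e : ℕ) : ℝ) ⟨hk0.trans hke.le, hkN⟩ m q
    (fun i => bpt ((fun _ => true) i)) (by
    rw [K.mk_vert, ← K.extreme_eq_s11, hq1, hu'])
  simp [bpt] at d0 d1
  have hme : m = e := by
    have : (m : ℝ) = e := by linarith
    exact_mod_cast this
  obtain ⟨m', rfl⟩ : ∃ m', m = m' + 1 := ⟨m - 1, by omega⟩
  obtain ⟨cs, hcs, hlie⟩ := ih (d - e) (by omega) (k + e) u' (by omega) hu'
  refine ⟨⟨m', q⟩ :: cs, ⟨hq0, ?_⟩, ?_⟩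
  · show K.chainFrom (K.extreme true q) cs w
    rw [hq1]; exact hcs
  · have hke' : (k : ℝ) + (m' + 1) = ((k + e : ℕ) : ℝ) := by
      rw [← hme]; push_cast; ring
    intro i hi
    cases i with
    | zero =>
      have b0 : bsum ((⟨m', q⟩ : Σ n, K.cube (n + 1)) :: cs) 0 = 0 := by simp [bsum]
      have b1 : bsum ((⟨m', q⟩ : Σ n, K.cube (n + 1)) :: cs) (0 + 1) = m' + 1 := by
        simp [bsum]
      rw [b0, b1, hke', add_zero]
      exact hqm
    | succ i =>
      have bs : ∀ i, (k : ℝ) + bsum ((⟨m', q⟩ : Σ n, K.cube (n + 1)) :: cs) (i + 1)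
          = ((k + e : ℕ) : ℝ) + bsum cs i := by
        intro i
        rw [← hke']
        simp [bsum]
        ring
      rw [bs, bs]
      exact hlie i (by simpa using hi)

/-- Every natural tame path from `v` to `w` lies in some
cube chain from `v` to `w`: the sets `N(K,𝐜)`, `𝐜 ∈ Ch(K)_v^w`, cover the
space of natural tame paths. -/
theorem stmt11 (K : PCS) (hfin : Finite (Σ n, K.cube n)) (hK : K.Proper)
    (h : ∀ {n : ℕ}, K.cube n → ℤ) (hh : K.IsHeight h)
    (v w : K.cube 0) (N : ℕ) (hv : h v = 0) (hw : h w = N)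
    (α : ℝ → K.Geo) (hα : K.NatTamePath h v w N α) :
    ∃ c : CubeChain K v w, K.liesIn α c.1 := by
  obtain ⟨hd, h0, hN, hn, ht⟩ := hα
  obtain ⟨cs, hcs, hl⟩ := K.chain_exists hfin hK h w N α hd hN hn ht N 0 v (by simp)
    (by rw [Nat.cast_zero]; exact h0)
  refine ⟨⟨cs, hcs⟩, fun i hi => ?_⟩
  have := hl i hi
  rw [Nat.cast_zero, zero_add, zero_add] at this
  exact this
end
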